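/- arXiv:2502.04272 — 5 statements merged into one kernel-verified Lean document; each statement's English description precedes it below -/
import Mathlib

section
/- (Conze–Le Borgne partition lemma, two-dimensional case) Let μ be a Borel probability measure on [0,1]² and let κ > 0. Then there exists a constant C > 0 such that for every n ∈ ℕ there exist a Borel set Y_n ⊆ [0,1]² and a finite partition 𝒫_n of [0,1]² \ Y_n into Borel sets satisfying: #𝒫_n ≤ e^{2κn}; diam(P) ≤ C e^{−κn} for every P ∈ 𝒫_n; μ(Y_n) ≤ e^{−κn}; and for every P ∈ 𝒫_n one has μ(P) > 0 and there exists a Lipschitz continuous function ρ_P : [0,1]² → [0,∞) with sup ρ_P ≤ C e^{3κn}, Lipschitz constant Lip(ρ_P) ≤ C e^{8κn}, and ∫ |ρ_P − μ(P)^{−1} 1_P| dμ ≤ C e^{−κn}. -/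
open MeasureTheory Set

/-- The closed unit square in the Euclidean plane. -/
def unitSquare : Set (EuclideanSpace ℝ (Fin 2)) :=
  {v : EuclideanSpace ℝ (Fin 2) | ∀ i, v i ∈ Set.Icc (0:ℝ) 1}

/-!
In dimension `d` and at scale `R = e^{κn}`, cut the cube into at most `R ^ d` grid cells with sides
of order `1 / R`, and discard the cells of measure less than `R ^ (-(d + 1))`: together they have
measure at most `1 / R`.

The indicator of a cell is close to a Lipschitz function if the grid lines carry little mass
nearby. Averaging over all translates of the grid produces one for which the strips of width of
order `ε / R` around the grid lines have measure `O(ε)`. Off these strips distinct cells are at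
distance at least `ε / R`, so there `1_P` coincides with a function of Lipschitz constant `R / ε`.
As `μ(P)⁻¹ ≤ R ^ (d + 1)`, the choice `ε = R ^ (-(d + 2))` makes the `L¹` error of the normalised
function `O(1 / R)`, at the price of the Lipschitz constant `R ^ (2 * d + 4)`.
-/

section Averaging

variable {X : Type*} [MeasurableSpace X]

lemma exists_measure_add_mem_le {G : Type*} [AddGroup G] [MeasurableSpace G] [MeasurableAdd₂ G]
    (ν : Measure G) [IsProbabilityMeasure ν] [ν.IsAddLeftInvariant]
    (μ : Measure X) [SFinite μ] {f : X → G} (hf : Measurable f) {A : Set G}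
    (hA : MeasurableSet A) :
    ∃ g, μ {x | f x + g ∈ A} ≤ ν A * μ univ := by
  have hmeas : MeasurableSet {z : X × G | f z.1 + z.2 ∈ A} :=
    ((hf.comp measurable_fst).add measurable_snd) hA
  obtain ⟨g, hg⟩ := exists_le_lintegral (μ := ν)
    (measurable_measure_prodMk_right (μ := μ) hmeas).aemeasurable
  refine ⟨g, hg.trans_eq ?_⟩
  calc ∫⁻ g, μ {x | f x + g ∈ A} ∂ν = μ.prod ν {z | f z.1 + z.2 ∈ A} :=
        (Measure.prod_apply_symm hmeas).symm
    _ = ∫⁻ x, ν ((f x + ·) ⁻¹' A) ∂μ := Measure.prod_apply hmeas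
    _ = ν A * μ univ := by simp only [measure_preimage_add, lintegral_const]

lemma exists_offset_measureReal_le (μ : Measure X) [IsFiniteMeasure μ] {f : X → ℝ}
    (hf : Measurable f) {ε : ℝ} (hε : 0 ≤ ε) :
    ∃ θ ∈ Ico (0 : ℝ) 1,
      μ.real {x | ‖((f x + θ : ℝ) : UnitAddCircle)‖ ≤ ε} ≤ 2 * ε * μ.real univ := by
  have : IsProbabilityMeasure (volume : Measure UnitAddCircle) := ⟨UnitAddCircle.measure_univ⟩
  obtain ⟨g, hg⟩ := exists_measure_add_mem_le (volume : Measure UnitAddCircle) μ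
    (f := fun x => (f x : UnitAddCircle)) (AddCircle.measurable_mk'.comp hf)
    (A := Metric.closedBall 0 ε) Metric.isClosed_closedBall.measurableSet
  obtain ⟨θ, hθ, rfl⟩ : ∃ θ ∈ Ico (0 : ℝ) 1, (θ : UnitAddCircle) = g := by
    simpa using (AddCircle.coe_image_Ico_eq (1 : ℝ) 0).ge (mem_univ g)
  refine ⟨θ, hθ, ENNReal.toReal_le_of_le_ofReal (by positivity) ?_⟩
  calc μ {x | ‖((f x + θ : ℝ) : UnitAddCircle)‖ ≤ ε}
      ≤ ENNReal.ofReal (min 1 (2 * ε)) * μ univ := by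
        simpa [AddCircle.volume_closedBall] using hg
    _ ≤ ENNReal.ofReal (2 * ε * μ.real univ) := by
        rw [ENNReal.ofReal_mul (by positivity), ofReal_measureReal]
        gcongr
        exact min_le_right _ _

end Averaging

section LipschitzDensity

variable {X : Type*} [PseudoMetricSpace X] {Q S p : Set X} {δ : ℝ}

lemma abs_thickenedIndicator_diff_sub_indicator_le (hδ : 0 < δ)
    (hsep : ∀ x ∈ p \ S, ∀ y ∈ (Q \ S) \ p, δ ≤ dist x y) {y : X} (hy : y ∈ Q) :
    |(thickenedIndicator hδ (p \ S) y : ℝ) - p.indicator (fun _ => (1 : ℝ)) y| ≤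
      S.indicator (fun _ => (1 : ℝ)) y := by
  have hle : (thickenedIndicator hδ (p \ S) y : ℝ) ≤ 1 := thickenedIndicator_le_one hδ _ y
  have hnonneg := (thickenedIndicator hδ (p \ S) y).coe_nonneg
  by_cases hyS : y ∈ S <;> by_cases hyp : y ∈ p
  · rw [indicator_of_mem hyS, indicator_of_mem hyp, abs_le]
    exact ⟨by linarith only [hnonneg], by linarith only [hle]⟩
  · simpa [hyS, hyp] using hle
  · simp [hyS, hyp, thickenedIndicator_one hδ (p \ S) ⟨hyp, hyS⟩]
  · have hfar : y ∉ Metric.thickening δ (p \ S) := fun h =>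
      let ⟨x, hx, hyx⟩ := Metric.mem_thickening_iff.1 h
      (hsep x hx y ⟨⟨hy, hyS⟩, hyp⟩).not_gt (dist_comm x y ▸ hyx)
    simp [hyS, hyp, thickenedIndicator_zero hδ (p \ S) hfar]

lemma exists_lipschitzWith_integral_abs_sub_le [MeasurableSpace X] (μ : Measure X)
    [IsFiniteMeasure μ] (hS : MeasurableSet S) (hQ : ∀ᵐ x ∂μ, x ∈ Q) (hδ : 0 < δ)
    (hsep : ∀ x ∈ p \ S, ∀ y ∈ (Q \ S) \ p, δ ≤ dist x y) :
    ∃ ρ : X → ℝ, (∀ x, 0 ≤ ρ x) ∧ (∀ x, ρ x ≤ (μ.real p)⁻¹) ∧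
      LipschitzWith (Real.toNNReal ((μ.real p)⁻¹ * δ⁻¹)) ρ ∧
      ∫ x, |ρ x - (μ.real p)⁻¹ * p.indicator (fun _ => (1 : ℝ)) x| ∂μ ≤
        (μ.real p)⁻¹ * μ.real S := by
  set c : ℝ := (μ.real p)⁻¹
  have hc : 0 ≤ c := by positivity
  set φ : X → ℝ := fun x => thickenedIndicator hδ (p \ S) x
  have hφ_lip : LipschitzWith (Real.toNNReal δ⁻¹) φ := by
    rw [Real.toNNReal_inv]
    exact lipschitzWith_thickenedIndicator hδ (p \ S)
  refine ⟨fun x => c * φ x, fun x => by positivity, fun x => ?_, ?_, ?_⟩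
  · exact mul_le_of_le_one_right hc (thickenedIndicator_le_one hδ _ x)
  · refine LipschitzWith.of_dist_le_mul fun x y => ?_
    rw [Real.toNNReal_mul hc, NNReal.coe_mul, Real.coe_toNNReal c hc, mul_assoc, Real.dist_eq,
      ← mul_sub, abs_mul, abs_of_nonneg hc]
    exact mul_le_mul_of_nonneg_left (hφ_lip.dist_le_mul x y) hc
  · calc ∫ x, |c * φ x - c * p.indicator (fun _ => (1 : ℝ)) x| ∂μ
        = c * ∫ x, |φ x - p.indicator (fun _ => (1 : ℝ)) x| ∂μ := by
          simp_rw [← mul_sub, abs_mul, abs_of_nonneg hc, integral_const_mul]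
      _ ≤ c * ∫ x, S.indicator (fun _ => (1 : ℝ)) x ∂μ := by
          refine mul_le_mul_of_nonneg_left ?_ hc
          refine integral_mono_of_nonneg (.of_forall fun _ => abs_nonneg _)
            ((integrable_const 1).indicator hS) ?_
          filter_upwards [hQ] with x hx
          exact abs_thickenedIndicator_diff_sub_indicator_le hδ hsep hx
      _ = c * μ.real S := by simp [integral_indicator_const _ hS]

end LipschitzDensity

section HeavyFibers

variable {X α : Type*} [MeasurableSpace X] (μ : Measure X) (Q : Set X) (g : X → α) (I : Finset α)
  (m : ℝ)

open Classical in
/-- The cells of the partition of `Q` by the values of `g`, for values in `I`, that have measure at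
least `m`. Equal (hence empty) cells are listed once. -/
noncomputable def heavyFibers : Finset (Set X) :=
  {z ∈ I | m ≤ μ.real (Q ∩ g ⁻¹' {z})}.image fun z => Q ∩ g ⁻¹' {z}

/-- The union of the cells of the partition of `Q` by the values of `g`, for values in `I`, that
have measure less than `m`; it is the part of `Q` not covered by `heavyFibers`. -/
def lightFibers : Set X :=
  ⋃ z ∈ {z ∈ (I : Set α) | μ.real (Q ∩ g ⁻¹' {z}) < m}, Q ∩ g ⁻¹' {z}

variable {μ Q g I m}

lemma mem_heavyFibers {p : Set X} :
    p ∈ heavyFibers μ Q g I m ↔ ∃ z ∈ I, m ≤ μ.real p ∧ p = Q ∩ g ⁻¹' {z} := by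
  simp only [heavyFibers, Finset.mem_image, Finset.mem_filter]
  grind

lemma mem_lightFibers {x : X} :
    x ∈ lightFibers μ Q g I m ↔ x ∈ Q ∧ g x ∈ I ∧ μ.real (Q ∩ g ⁻¹' {g x}) < m := by
  simp only [lightFibers, mem_iUnion]
  grind

lemma lightFibers_subset : lightFibers μ Q g I m ⊆ Q := fun _ hx => (mem_lightFibers.1 hx).1

lemma card_heavyFibers_le : (heavyFibers μ Q g I m).card ≤ I.card :=
  Finset.card_image_le.trans (Finset.card_filter_le _ _)

lemma disjoint_of_mem_heavyFibers {p q : Set X} (hp : p ∈ heavyFibers μ Q g I m)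
    (hq : q ∈ heavyFibers μ Q g I m) (hpq : p ≠ q) : Disjoint p q := by
  obtain ⟨z, -, -, rfl⟩ := mem_heavyFibers.1 hp
  obtain ⟨w, -, -, rfl⟩ := mem_heavyFibers.1 hq
  have hzw : z ≠ w := fun h => hpq (h ▸ rfl)
  exact ((disjoint_singleton.2 hzw).preimage g).mono inter_subset_right inter_subset_right

lemma biUnion_heavyFibers (hg : MapsTo g Q I) :
    ⋃ p ∈ heavyFibers μ Q g I m, p = Q \ lightFibers μ Q g I m := by
  ext x
  simp only [mem_iUnion, mem_sdiff, mem_lightFibers, mem_heavyFibers]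
  constructor
  · rintro ⟨_, ⟨z, -, hm, rfl⟩, hxQ, rfl⟩
    exact ⟨hxQ, fun h => h.2.2.not_ge hm⟩
  · rintro ⟨hxQ, hx⟩
    exact ⟨_, ⟨g x, hg hxQ, not_lt.1 fun h => hx ⟨hxQ, hg hxQ, h⟩, rfl⟩, hxQ, rfl⟩

lemma measureReal_lightFibers_le (hm : 0 ≤ m) :
    μ.real (lightFibers μ Q g I m) ≤ I.card * m := by
  classical
  set J := {z ∈ I | μ.real (Q ∩ g ⁻¹' {z}) < m}
  calc μ.real (lightFibers μ Q g I m) = μ.real (⋃ z ∈ J, Q ∩ g ⁻¹' {z}) := by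
        simp [lightFibers, J]
    _ ≤ ∑ z ∈ J, μ.real (Q ∩ g ⁻¹' {z}) := measureReal_biUnion_finset_le _ _
    _ ≤ J.card • m := Finset.sum_le_card_nsmul _ _ _ fun z hz => (Finset.mem_filter.1 hz).2.le
    _ ≤ I.card * m := by
        rw [nsmul_eq_mul]
        gcongr
        exact Finset.filter_subset _ _

variable [MeasurableSpace α] [MeasurableSingletonClass α]

lemma measurableSet_of_mem_heavyFibers (hQ : MeasurableSet Q) (hg : Measurable g) {p : Set X}
    (hp : p ∈ heavyFibers μ Q g I m) : MeasurableSet p := by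
  obtain ⟨z, -, -, rfl⟩ := mem_heavyFibers.1 hp
  exact hQ.inter (hg (measurableSet_singleton z))

lemma measurableSet_lightFibers (hQ : MeasurableSet Q) (hg : Measurable g) :
    MeasurableSet (lightFibers μ Q g I m) :=
  (I.finite_toSet.subset (sep_subset _ _)).measurableSet_biUnion fun z _ =>
    hQ.inter (hg (measurableSet_singleton z))

end HeavyFibers

lemma norm_coe_unitAddCircle_le_sub_of_floor_lt_floor {a b : ℝ} (h : ⌊a⌋₊ < ⌊b⌋₊) :
    ‖(b : UnitAddCircle)‖ ≤ b - a := by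
  have hb : (⌊b⌋₊ : ℝ) ≤ b := Nat.floor_le (Nat.pos_of_floor_pos (pos_of_gt h)).le
  have ha : a ≤ ⌊b⌋₊ := ((Nat.lt_floor_add_one a).trans_le (by exact_mod_cast h)).le
  calc ‖(b : UnitAddCircle)‖ = |b - round b| := UnitAddCircle.norm_eq
    _ ≤ |b - (⌊b⌋₊ : ℤ)| := round_le b _
    _ = b - ⌊b⌋₊ := by rw [Int.cast_natCast, abs_of_nonneg (sub_nonneg.2 hb)]
    _ ≤ b - a := by linarith

/-- The index in `{0, …, N - 1}` of the interval containing `u ∈ [0, 1]` when `[0, 1]` is cut at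
the points of `(ℤ - θ) / N`, for `θ ∈ [0, 1]`. There may be `N + 1` such intervals; the truncation
by `min` merges the last ones. -/
noncomputable def gridIndex (N : ℕ) (θ u : ℝ) : ℕ := min ⌊N * u + θ⌋₊ (N - 1)

section GridIndex

variable {N : ℕ} {θ u v : ℝ}

lemma measurable_gridIndex (N : ℕ) (θ : ℝ) : Measurable (gridIndex N θ) := by
  unfold gridIndex
  fun_prop

lemma gridIndex_lt (hN : 0 < N) : gridIndex N θ u < N := by
  unfold gridIndex
  omega

lemma norm_le_mul_sub_of_gridIndex_lt (h : gridIndex N θ u < gridIndex N θ v) :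
    ‖((N * v + θ : ℝ) : UnitAddCircle)‖ ≤ N * (v - u) := by
  have hfloor : ⌊N * u + θ⌋₊ < ⌊N * v + θ⌋₊ := by
    unfold gridIndex at h
    omega
  linarith [norm_coe_unitAddCircle_le_sub_of_floor_lt_floor hfloor]

lemma mul_sub_le_two_of_gridIndex_eq (hθ : θ ∈ Icc (0 : ℝ) 1) (hu : 0 ≤ u) (hv : v ≤ 1)
    (h : gridIndex N θ u = gridIndex N θ v) : N * (v - u) ≤ 2 := by
  have hu_floor : (⌊N * u + θ⌋₊ : ℝ) ≤ N * u + θ :=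
    Nat.floor_le (add_nonneg (by positivity) hθ.1)
  obtain hsame | hlast : ⌊N * u + θ⌋₊ = ⌊N * v + θ⌋₊ ∨ N ≤ ⌊N * u + θ⌋₊ + 1 := by
    unfold gridIndex at h
    omega
  · rw [hsame] at hu_floor
    linarith [Nat.lt_floor_add_one (N * v + θ)]
  · have hN : (N : ℝ) ≤ ⌊N * u + θ⌋₊ + 1 := by exact_mod_cast hlast
    have hNv : N * v ≤ N := mul_le_of_le_one_right N.cast_nonneg hv
    linarith [hθ.2]

lemma mul_abs_sub_le_two_of_gridIndex_eq (hθ : θ ∈ Icc (0 : ℝ) 1) (hu : u ∈ Icc (0 : ℝ) 1)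
    (hv : v ∈ Icc (0 : ℝ) 1) (h : gridIndex N θ u = gridIndex N θ v) : N * |u - v| ≤ 2 := by
  rcases abs_choice (u - v) with habs | habs <;> rw [habs]
  · exact mul_sub_le_two_of_gridIndex_eq hθ hv.1 hu.2 h.symm
  · rw [neg_sub]
    exact mul_sub_le_two_of_gridIndex_eq hθ hu.1 hv.2 h

lemma le_mul_abs_sub_of_gridIndex_ne {ε : ℝ} (h : gridIndex N θ u ≠ gridIndex N θ v)
    (hu : ε ≤ ‖((N * u + θ : ℝ) : UnitAddCircle)‖)
    (hv : ε ≤ ‖((N * v + θ : ℝ) : UnitAddCircle)‖) : ε ≤ N * |u - v| := by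
  rcases h.lt_or_gt with hlt | hlt
  · rw [abs_sub_comm]
    exact (hv.trans (norm_le_mul_sub_of_gridIndex_lt hlt)).trans (by gcongr; exact le_abs_self _)
  · exact (hu.trans (norm_le_mul_sub_of_gridIndex_lt hlt)).trans (by gcongr; exact le_abs_self _)

end GridIndex

section CubeGrid

variable {ι : Type*}

/-- The closed unit cube in Euclidean space. -/
def unitCube (ι : Type*) : Set (EuclideanSpace ℝ ι) :=
  {x | ∀ i, x i ∈ Icc (0 : ℝ) 1}

/-- The multi-index of the grid cell containing a point: coordinate `i` is cut into `N` intervals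
with offset `θ i`. -/
noncomputable def cubeGridIndex (N : ℕ) (θ : ι → ℝ) (x : EuclideanSpace ℝ ι) : ι → ℕ :=
  fun i => gridIndex N (θ i) (x i)

/-- The points with a coordinate within `ε / N` of a cutting point of the grid, the norm on
`UnitAddCircle` being the distance to the nearest integer. -/
def gridStrips (N : ℕ) (ε : ℝ) (θ : ι → ℝ) : Set (EuclideanSpace ℝ ι) :=
  ⋃ i, {x | ‖((N * x i + θ i : ℝ) : UnitAddCircle)‖ ≤ ε}

lemma measurable_cubeGridIndex (N : ℕ) (θ : ι → ℝ) : Measurable (cubeGridIndex N θ) :=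
  measurable_pi_lambda _ fun i => (measurable_gridIndex N (θ i)).comp (by fun_prop)

lemma measurableSet_unitCube [Countable ι] : MeasurableSet (unitCube ι) := by
  simp only [unitCube, Set.ofPred_forall]
  exact MeasurableSet.iInter fun i =>
    (by fun_prop : Measurable fun x : EuclideanSpace ℝ ι => x i) measurableSet_Icc

lemma measurableSet_gridStrips [Countable ι] (N : ℕ) (ε : ℝ) (θ : ι → ℝ) :
    MeasurableSet (gridStrips N ε θ) :=
  MeasurableSet.iUnion fun i => measurableSet_le
    (AddCircle.measurable_mk'.comp (by fun_prop)).norm measurable_const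

variable [Fintype ι] {N : ℕ} {θ : ι → ℝ} {x y : EuclideanSpace ℝ ι}

lemma exists_measureReal_gridStrips_le (μ : Measure (EuclideanSpace ℝ ι)) [IsFiniteMeasure μ]
    (N : ℕ) {ε : ℝ} (hε : 0 ≤ ε) :
    ∃ θ : ι → ℝ, (∀ i, θ i ∈ Icc (0 : ℝ) 1) ∧
      μ.real (gridStrips N ε θ) ≤ Fintype.card ι * (2 * ε * μ.real univ) := by
  choose θ hθ hμθ using fun i : ι =>
    exists_offset_measureReal_le μ (f := fun x : EuclideanSpace ℝ ι => N * x i) (by fun_prop) hε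
  refine ⟨θ, fun i => Ico_subset_Icc_self (hθ i), ?_⟩
  calc μ.real (gridStrips N ε θ)
      ≤ ∑ i, μ.real {x | ‖((N * x i + θ i : ℝ) : UnitAddCircle)‖ ≤ ε} :=
        measureReal_iUnion_fintype_le _
    _ ≤ ∑ _i : ι, 2 * ε * μ.real univ := Finset.sum_le_sum fun i _ => hμθ i
    _ = Fintype.card ι * (2 * ε * μ.real univ) := by simp

lemma dist_le_sqrt_card_mul {r : ℝ} (hr : 0 ≤ r) (h : ∀ i, |x i - y i| ≤ r) :
    dist x y ≤ √(Fintype.card ι) * r := by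
  rw [EuclideanSpace.dist_eq]
  refine Real.sqrt_le_iff.2 ⟨by positivity, ?_⟩
  rw [mul_pow, Real.sq_sqrt (Nat.cast_nonneg _), ← nsmul_eq_mul]
  exact Finset.sum_le_card_nsmul _ _ _ fun i _ => pow_le_pow_left₀ dist_nonneg (h i) 2

lemma diam_unitCube_inter_fiber_le (hN : 0 < N) (hθ : ∀ i, θ i ∈ Icc (0 : ℝ) 1) (z : ι → ℕ) :
    Metric.diam (unitCube ι ∩ cubeGridIndex N θ ⁻¹' {z}) ≤ √(Fintype.card ι) * (2 / N) := by
  refine Metric.diam_le_of_forall_dist_le (by positivity) fun x hx y hy =>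
    dist_le_sqrt_card_mul (by positivity) fun i => ?_
  rw [le_div_iff₀' (by positivity)]
  exact mul_abs_sub_le_two_of_gridIndex_eq (hθ i) (hx.1 i) (hy.1 i)
    (congrFun (hx.2.trans hy.2.symm) i)

lemma div_le_dist_of_cubeGridIndex_ne {ε : ℝ} (hN : 0 < N)
    (hne : cubeGridIndex N θ x ≠ cubeGridIndex N θ y)
    (hx : x ∉ gridStrips N ε θ) (hy : y ∉ gridStrips N ε θ) : ε / N ≤ dist x y := by
  obtain ⟨i, hi⟩ := Function.ne_iff.1 hne
  simp only [gridStrips, mem_iUnion, mem_ofPred_eq, not_exists, not_le] at hx hy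
  rw [div_le_iff₀' (by positivity)]
  calc ε ≤ N * |x i - y i| := le_mul_abs_sub_of_gridIndex_ne hi (hx i).le (hy i).le
    _ ≤ N * dist x y := by
        gcongr
        simpa [dist_eq_norm] using PiLp.norm_apply_le (x - y) i

lemma exists_lipschitz_density_gridCell (μ : Measure (EuclideanSpace ℝ ι)) [IsFiniteMeasure μ]
    (hμ : ∀ᵐ x ∂μ, x ∈ unitCube ι) (hN : 0 < N) (θ : ι → ℝ) {ε m : ℝ} (hε : 0 < ε) (hm : 0 < m)
    {p : Set (EuclideanSpace ℝ ι)} {z : ι → ℕ} (hp : p = unitCube ι ∩ cubeGridIndex N θ ⁻¹' {z})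
    (hmp : m ≤ μ.real p) :
    ∃ ρ : EuclideanSpace ℝ ι → ℝ, (∀ x, 0 ≤ ρ x) ∧ (∀ x, ρ x ≤ m⁻¹) ∧
      LipschitzWith (Real.toNNReal (m⁻¹ * (N / ε))) ρ ∧
      ∫ x, |ρ x - (μ.real p)⁻¹ * p.indicator (fun _ => (1 : ℝ)) x| ∂μ ≤
        m⁻¹ * μ.real (gridStrips N ε θ) := by
  have hinv : (μ.real p)⁻¹ ≤ m⁻¹ := inv_anti₀ hm hmp
  have hsep : ∀ x ∈ p \ gridStrips N ε θ, ∀ y ∈ (unitCube ι \ gridStrips N ε θ) \ p,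
      ε / N ≤ dist x y := by
    rintro x ⟨hxp, hxS⟩ y ⟨⟨hyQ, hyS⟩, hyp⟩
    rw [hp] at hxp hyp
    exact div_le_dist_of_cubeGridIndex_ne hN (fun hxy => hyp ⟨hyQ, hxy.symm.trans hxp.2⟩) hxS hyS
  obtain ⟨ρ, hρ_nonneg, hρ_le, hρ_lip, hρ_int⟩ := exists_lipschitzWith_integral_abs_sub_le μ
    (measurableSet_gridStrips N ε θ) hμ (by positivity) hsep
  rw [inv_div] at hρ_lip
  exact ⟨ρ, hρ_nonneg, fun x => (hρ_le x).trans hinv,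
    hρ_lip.weaken (Real.toNNReal_le_toNNReal (by gcongr)), hρ_int.trans (by gcongr)⟩

theorem exists_grid_partition_with_lipschitz_densities (μ : Measure (EuclideanSpace ℝ ι))
    [IsFiniteMeasure μ] (hμ : ∀ᵐ x ∂μ, x ∈ unitCube ι) (hN : 0 < N) {m ε : ℝ} (hm : 0 < m)
    (hε : 0 < ε) :
    ∃ (Y : Set (EuclideanSpace ℝ ι)) (P : Finset (Set (EuclideanSpace ℝ ι))),
      MeasurableSet Y ∧ Y ⊆ unitCube ι ∧
      (∀ p ∈ P, MeasurableSet p) ∧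
      (∀ p ∈ P, ∀ q ∈ P, p ≠ q → Disjoint p q) ∧
      (⋃ p ∈ P, p) = unitCube ι \ Y ∧
      P.card ≤ N ^ Fintype.card ι ∧
      (∀ p ∈ P, Metric.diam p ≤ √(Fintype.card ι) * (2 / N)) ∧
      μ.real Y ≤ N ^ Fintype.card ι * m ∧
      ∀ p ∈ P, m ≤ μ.real p ∧
        ∃ ρ : EuclideanSpace ℝ ι → ℝ,
          (∀ x, 0 ≤ ρ x) ∧
          (∀ x, ρ x ≤ m⁻¹) ∧
          LipschitzWith (Real.toNNReal (m⁻¹ * (N / ε))) ρ ∧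
          ∫ x, |ρ x - (μ.real p)⁻¹ * p.indicator (fun _ => (1 : ℝ)) x| ∂μ ≤
            m⁻¹ * (Fintype.card ι * (2 * ε * μ.real univ)) := by
  classical
  obtain ⟨θ, hθ, hstrips⟩ := exists_measureReal_gridStrips_le μ N hε.le
  have hcube : MeasurableSet (unitCube ι) := measurableSet_unitCube
  have hindex : Measurable (cubeGridIndex N θ) := measurable_cubeGridIndex N θ
  set I : Finset (ι → ℕ) := Fintype.piFinset fun _ => Finset.range N
  have hI : I.card = N ^ Fintype.card ι := by simp [I]
  have hmaps : MapsTo (cubeGridIndex N θ) (unitCube ι) I := fun x _ =>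
    Finset.mem_coe.2 (Fintype.mem_piFinset.2 fun i => Finset.mem_range.2 (gridIndex_lt hN))
  refine ⟨lightFibers μ (unitCube ι) (cubeGridIndex N θ) I m,
    heavyFibers μ (unitCube ι) (cubeGridIndex N θ) I m,
    measurableSet_lightFibers hcube hindex, lightFibers_subset,
    fun p => measurableSet_of_mem_heavyFibers hcube hindex,
    fun p hp q hq => disjoint_of_mem_heavyFibers hp hq, biUnion_heavyFibers hmaps,
    hI ▸ card_heavyFibers_le, fun p hp => ?_, ?_, fun p hp => ?_⟩
  · obtain ⟨z, -, -, rfl⟩ := mem_heavyFibers.1 hp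
    exact diam_unitCube_inter_fiber_le hN hθ z
  · exact_mod_cast hI ▸ measureReal_lightFibers_le hm.le
  · obtain ⟨z, -, hmp, hpz⟩ := mem_heavyFibers.1 hp
    obtain ⟨ρ, hρ_nonneg, hρ_le, hρ_lip, hρ_int⟩ :=
      exists_lipschitz_density_gridCell μ hμ hN θ hε hm hpz hmp
    exact ⟨hmp, ρ, hρ_nonneg, hρ_le, hρ_lip, hρ_int.trans (by gcongr)⟩

end CubeGrid

lemma inv_natFloor_le_two_mul_inv {R : ℝ} (hR : 1 ≤ R) : (⌊R⌋₊ : ℝ)⁻¹ ≤ 2 * R⁻¹ := by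
  have hfloor : (1 : ℝ) ≤ ⌊R⌋₊ := by exact_mod_cast Nat.floor_pos.2 hR
  rw [← div_eq_mul_inv, inv_le_comm₀ (by positivity) (by positivity), inv_div,
    div_le_iff₀' two_pos]
  linarith [Nat.lt_floor_add_one R]

theorem conze_le_borgne_partition_general {ι : Type*} [Fintype ι]
    (μ : Measure (EuclideanSpace ℝ ι)) [IsFiniteMeasure μ] (hμ : ∀ᵐ x ∂μ, x ∈ unitCube ι) :
    ∃ C : ℝ, 0 < C ∧ ∀ R : ℝ, 1 ≤ R →
      ∃ (Y : Set (EuclideanSpace ℝ ι)) (P : Finset (Set (EuclideanSpace ℝ ι))),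
        MeasurableSet Y ∧ Y ⊆ unitCube ι ∧
        (∀ p ∈ P, MeasurableSet p) ∧
        (∀ p ∈ P, ∀ q ∈ P, p ≠ q → Disjoint p q) ∧
        (⋃ p ∈ P, p) = unitCube ι \ Y ∧
        (P.card : ℝ) ≤ R ^ Fintype.card ι ∧
        (∀ p ∈ P, Metric.diam p ≤ C * R⁻¹) ∧
        μ.real Y ≤ R⁻¹ ∧
        ∀ p ∈ P, 0 < μ.real p ∧
          ∃ ρ : EuclideanSpace ℝ ι → ℝ,
            (∀ x, 0 ≤ ρ x) ∧
            (∀ x, ρ x ≤ C * R ^ (Fintype.card ι + 1)) ∧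
            LipschitzWith (Real.toNNReal (C * R ^ (2 * Fintype.card ι + 4))) ρ ∧
            ∫ x, |ρ x - (μ.real p)⁻¹ * p.indicator (fun _ => (1 : ℝ)) x| ∂μ ≤ C * R⁻¹ := by
  set d := Fintype.card ι
  obtain ⟨C, hC_one, hC_diam, hC_int⟩ :
      ∃ C : ℝ, 1 ≤ C ∧ 4 * √d ≤ C ∧ 2 * d * μ.real univ ≤ C :=
    ⟨max 1 (max (4 * √d) (2 * d * μ.real univ)), by simp⟩
  refine ⟨C, one_pos.trans_le hC_one, fun R hR => ?_⟩
  have hR0 : 0 < R := one_pos.trans_le hR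
  have hfloor : (⌊R⌋₊ : ℝ) ≤ R := Nat.floor_le hR0.le
  obtain ⟨Y, P, hY, hYcube, hP, hdisj, hcover, hcard, hdiam, hμY, hdensity⟩ :=
    exists_grid_partition_with_lipschitz_densities μ hμ (Nat.floor_pos.2 hR)
      (by positivity : 0 < (R ^ (d + 1))⁻¹) (by positivity : 0 < (R ^ (d + 2))⁻¹)
  refine ⟨Y, P, hY, hYcube, hP, hdisj, hcover, ?_, fun p hp => ?_, ?_, fun p hp => ?_⟩
  · calc (P.card : ℝ) ≤ (⌊R⌋₊ : ℝ) ^ d := by exact_mod_cast hcard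
      _ ≤ R ^ d := by gcongr
  · calc Metric.diam p ≤ √d * (2 * (⌊R⌋₊ : ℝ)⁻¹) := hdiam p hp
      _ ≤ √d * (2 * (2 * R⁻¹)) := by gcongr; exact inv_natFloor_le_two_mul_inv hR
      _ = 4 * √d * R⁻¹ := by ring
      _ ≤ C * R⁻¹ := by gcongr
  · calc μ.real Y ≤ (⌊R⌋₊ : ℝ) ^ d * (R ^ (d + 1))⁻¹ := hμY
      _ ≤ R ^ d * (R ^ (d + 1))⁻¹ := by gcongr
      _ = R⁻¹ := by field_simp; ring
  · obtain ⟨hp_heavy, ρ, hρ_nonneg, hρ_le, hρ_lip, hρ_int⟩ := hdensity p hp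
    rw [inv_inv] at hρ_le hρ_lip hρ_int
    refine ⟨(by positivity : 0 < (R ^ (d + 1))⁻¹).trans_le hp_heavy, ρ, hρ_nonneg,
      fun x => (hρ_le x).trans (le_mul_of_one_le_left (by positivity) hC_one),
      hρ_lip.weaken (Real.toNNReal_le_toNNReal ?_), hρ_int.trans ?_⟩
    · calc R ^ (d + 1) * (⌊R⌋₊ / (R ^ (d + 2))⁻¹) ≤ R ^ (d + 1) * (R / (R ^ (d + 2))⁻¹) := by
            gcongr
        _ = 1 * R ^ (2 * d + 4) := by rw [div_inv_eq_mul]; ring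
        _ ≤ C * R ^ (2 * d + 4) := by gcongr
    · calc R ^ (d + 1) * (d * (2 * (R ^ (d + 2))⁻¹ * μ.real univ))
          = 2 * d * μ.real univ * R⁻¹ := by field_simp; ring
        _ ≤ C * R⁻¹ := by gcongr

/-- **Conze–Le Borgne partition lemma** (two-dimensional case,
Lemma `lem:partition`): for a Borel probability measure `μ` on `[0,1]²` and
`κ > 0`, there are sets `Y_n` of measure `≤ e^{−κn}` and partitions `𝒫_n` of
`[0,1]² \ Y_n` with at most `e^{2κn}` cells of diameter `≤ C e^{−κn}`, each cell
of positive measure and admitting a Lipschitz density `ρ_P` approximating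
`μ(P)⁻¹ 1_P` in `L¹(μ)` up to `C e^{−κn}`. -/
theorem conze_le_borgne_partition
    (μ : Measure (EuclideanSpace ℝ (Fin 2))) [IsProbabilityMeasure μ]
    (hμQ : μ unitSquare = 1) (κ : ℝ) (hκ : 0 < κ) :
    ∃ C : ℝ, 0 < C ∧ ∀ n : ℕ,
      ∃ (Y : Set (EuclideanSpace ℝ (Fin 2)))
        (P : Finset (Set (EuclideanSpace ℝ (Fin 2)))),
        MeasurableSet Y ∧ Y ⊆ unitSquare ∧
        (∀ p ∈ P, MeasurableSet p) ∧
        (∀ p ∈ P, ∀ q ∈ P, p ≠ q → Disjoint p q) ∧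
        (⋃ p ∈ P, p) = unitSquare \ Y ∧
        (P.card : ℝ) ≤ Real.exp (2 * κ * n) ∧
        (∀ p ∈ P, Metric.diam p ≤ C * Real.exp (-κ * n)) ∧
        (μ Y).toReal ≤ Real.exp (-κ * n) ∧
        ∀ p ∈ P, 0 < (μ p).toReal ∧
          ∃ ρ : EuclideanSpace ℝ (Fin 2) → ℝ,
            (∀ x, 0 ≤ ρ x) ∧
            (∀ x, ρ x ≤ C * Real.exp (3 * κ * n)) ∧
            LipschitzWith (Real.toNNReal (C * Real.exp (8 * κ * n))) ρ ∧
            ∫ x, |ρ x - ((μ p).toReal)⁻¹ * p.indicator (fun _ => (1:ℝ)) x| ∂μ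
              ≤ C * Real.exp (-κ * n) := by
  obtain ⟨C, hC, hpart⟩ := conze_le_borgne_partition_general μ
    ((mem_ae_iff_prob_eq_one measurableSet_unitCube).2 hμQ)
  refine ⟨C, hC, fun n => ?_⟩
  simpa [← Real.exp_nat_mul, ← Real.exp_neg, mul_assoc, measureReal_def, unitSquare, unitCube] using
    hpart (Real.exp (κ * n)) (Real.one_le_exp (by positivity))
end

section
/- Let (X, d) be a compact metric space, T : X → X Lipschitz with Lipschitz constant L ≥ 1, and μ a T-invariant Borel probability measure. Assume two-fold exponential decay of correlations for Lipschitz observables: there exist C, τ > 0 such that |∫ φ · (ψ∘T^n) dμ − ∫φ dμ ∫ψ dμ| ≤ C ‖φ‖_Lip ‖ψ‖_Lip e^{−τn} for all Lipschitz φ, ψ : X → ℝ and all n ≥ 1. Then for every σ ∈ (0,1] with σ log L < τ, setting τ' = τ − σ log L, there exists C' > 0 such that for all Lipschitz φ₁, φ₂, φ₃ : X → ℝ and all integers 1 ≤ k ≤ σl: |∫ φ₁ · (φ₂∘T^k) · (φ₃∘T^{k+l}) dμ − ∫ φ₁ · (φ₂∘T^k) dμ · ∫ φ₃ dμ| ≤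 C' ‖φ₁‖_Lip ‖φ₂‖_Lip ‖φ₃‖_Lip e^{−τ' l}. -/
/-!
A single application of two-fold decay suffices, to the observables `φ₁ · (φ₂ ∘ T^k)` and `φ₃` at
time `k + l`. The Lipschitz norm is submultiplicative and composing with `T^k` costs a factor of
at most `L^k`, so the first observable has norm at most `‖φ₁‖_Lip · L^k ‖φ₂‖_Lip`. Since `k ≤ σ l`,
the loss `L^k` is at most `exp (σ l log L)`, whence the rate `τ - σ log L`.
-/

open MeasureTheory Set

/-- The supremum norm `sup |f|`. -/
noncomputable def supNorm {X : Type*} (f : X → ℝ) : ℝ := ⨆ x, |f x|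

/-- The optimal Lipschitz constant of `f`. -/
noncomputable def lipConst {X : Type*} [PseudoMetricSpace X] (f : X → ℝ) : ℝ :=
  sInf {K : ℝ | 0 ≤ K ∧ LipschitzWith (Real.toNNReal K) f}

/-- The Lipschitz norm `‖f‖_Lip = sup |f| + Lip(f)`. -/
noncomputable def lipNorm {X : Type*} [PseudoMetricSpace X] (f : X → ℝ) : ℝ :=
  supNorm f + lipConst f

open scoped NNReal

lemma supNorm_nonneg {X : Type*} (f : X → ℝ) : 0 ≤ supNorm f :=
  Real.iSup_nonneg fun _ => abs_nonneg _

lemma abs_le_supNorm {X : Type*} {f : X → ℝ} (hf : BddAbove (range fun x => |f x|)) (x : X) :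
    |f x| ≤ supNorm f :=
  le_ciSup hf x

lemma abs_mul_le_supNorm_mul {X : Type*} {f g : X → ℝ}
    (hf : BddAbove (range fun x => |f x|)) (hg : BddAbove (range fun x => |g x|)) (x : X) :
    |(f * g) x| ≤ supNorm f * supNorm g := by
  rw [Pi.mul_apply, abs_mul]
  exact mul_le_mul (abs_le_supNorm hf x) (abs_le_supNorm hg x) (abs_nonneg _) (supNorm_nonneg f)

lemma supNorm_mul_le {X : Type*} {f g : X → ℝ}
    (hf : BddAbove (range fun x => |f x|)) (hg : BddAbove (range fun x => |g x|)) :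
    supNorm (f * g) ≤ supNorm f * supNorm g :=
  Real.iSup_le (abs_mul_le_supNorm_mul hf hg) (mul_nonneg (supNorm_nonneg f) (supNorm_nonneg g))

lemma supNorm_comp_le {X Y : Type*} {g : Y → ℝ} (hg : BddAbove (range fun y => |g y|))
    (S : X → Y) : supNorm (g ∘ S) ≤ supNorm g :=
  Real.iSup_le (fun x => abs_le_supNorm hg (S x)) (supNorm_nonneg g)

section LipschitzNorm

variable {X Y : Type*} [PseudoMetricSpace X] [PseudoMetricSpace Y] {f g : X → ℝ}

lemma lipConst_nonneg (f : X → ℝ) : 0 ≤ lipConst f :=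
  Real.sInf_nonneg fun _ hK => hK.1

lemma lipConst_le {K : ℝ≥0} (hf : LipschitzWith K f) : lipConst f ≤ K :=
  csInf_le ⟨0, fun _ hM => hM.1⟩ ⟨K.coe_nonneg, by rwa [Real.toNNReal_coe]⟩

-- The admissible constants form a closed set, so the infimum defining `lipConst` is attained.
lemma lipschitzWith_lipConst (hf : ∃ K, LipschitzWith K f) :
    LipschitzWith (lipConst f).toNNReal f := by
  obtain ⟨K, hK⟩ := hf
  have hclosed : IsClosed {K : ℝ | 0 ≤ K ∧ LipschitzWith K.toNNReal f} := by
    simp only [lipschitzWith_iff_dist_le_mul, ofPred_and, ofPred_forall]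
    exact isClosed_Ici.inter <| isClosed_iInter fun x => isClosed_iInter fun y =>
      isClosed_le continuous_const (by fun_prop)
  exact (hclosed.csInf_mem ⟨K, K.coe_nonneg, by rwa [Real.toNNReal_coe]⟩
    ⟨0, fun _ hM => hM.1⟩).2

lemma lipschitzWith_mul_of_norm_le {R : Type*} [NonUnitalSeminormedRing R] {f g : X → R}
    {A B K M : ℝ≥0} (hfA : ∀ x, ‖f x‖ ≤ A) (hgB : ∀ x, ‖g x‖ ≤ B)
    (hf : LipschitzWith K f) (hg : LipschitzWith M g) :
    LipschitzWith (A * M + K * B) (f * g) := by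
  refine LipschitzWith.of_dist_le_mul fun x y => ?_
  calc dist (f x * g x) (f y * g y)
      ≤ dist (f x * g x) (f x * g y) + dist (f x * g y) (f y * g y) := dist_triangle _ _ _
    _ = ‖f x * (g x - g y)‖ + ‖(f x - f y) * g y‖ := by
        rw [dist_eq_norm, dist_eq_norm, mul_sub, sub_mul]
    _ ≤ ‖f x‖ * dist (g x) (g y) + dist (f x) (f y) * ‖g y‖ := by
        rw [dist_eq_norm, dist_eq_norm]
        exact add_le_add (norm_mul_le _ _) (norm_mul_le _ _)
    _ ≤ A * (M * dist x y) + K * dist x y * B := by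
        gcongr
        exacts [hfA x, hg.dist_le_mul x y, hf.dist_le_mul x y, hgB y]
    _ = ↑(A * M + K * B) * dist x y := by push_cast; ring

lemma lipNorm_nonneg (f : X → ℝ) : 0 ≤ lipNorm f :=
  add_nonneg (supNorm_nonneg f) (lipConst_nonneg f)

/-- Bounded Lipschitz observables: the functions whose `lipNorm` is a genuine norm. Without the
two conditions, `supNorm` or `lipConst` takes the junk value `0`. -/
structure IsBoundedLipschitz (f : X → ℝ) : Prop where
  lipschitz : ∃ K, LipschitzWith K f
  bddAbove_abs : BddAbove (range fun x => |f x|)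

namespace IsBoundedLipschitz

lemma of_compactSpace [CompactSpace X] (hf : ∃ K, LipschitzWith K f) : IsBoundedLipschitz f where
  lipschitz := hf
  bddAbove_abs := (isCompact_range hf.choose_spec.continuous.abs).bddAbove

lemma lipschitzWith_mul (hf : IsBoundedLipschitz f) (hg : IsBoundedLipschitz g) :
    LipschitzWith ((supNorm f).toNNReal * (lipConst g).toNNReal +
      (lipConst f).toNNReal * (supNorm g).toNNReal) (f * g) :=
  lipschitzWith_mul_of_norm_le
    (fun x => (abs_le_supNorm hf.bddAbove_abs x).trans (Real.le_coe_toNNReal _))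
    (fun x => (abs_le_supNorm hg.bddAbove_abs x).trans (Real.le_coe_toNNReal _))
    (lipschitzWith_lipConst hf.lipschitz) (lipschitzWith_lipConst hg.lipschitz)

lemma mul (hf : IsBoundedLipschitz f) (hg : IsBoundedLipschitz g) :
    IsBoundedLipschitz (f * g) where
  lipschitz := ⟨_, hf.lipschitzWith_mul hg⟩
  bddAbove_abs := ⟨supNorm f * supNorm g,
    forall_mem_range.2 (abs_mul_le_supNorm_mul hf.bddAbove_abs hg.bddAbove_abs)⟩

lemma comp {g : Y → ℝ} (hg : IsBoundedLipschitz g) {S : X → Y} {K : ℝ≥0}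
    (hS : LipschitzWith K S) : IsBoundedLipschitz (g ∘ S) where
  lipschitz := ⟨_, hg.lipschitz.choose_spec.comp hS⟩
  bddAbove_abs := hg.bddAbove_abs.mono (range_comp_subset_range S fun y => |g y|)

lemma lipConst_mul_le (hf : IsBoundedLipschitz f) (hg : IsBoundedLipschitz g) :
    lipConst (f * g) ≤ supNorm f * lipConst g + lipConst f * supNorm g := by
  simpa only [NNReal.coe_add, NNReal.coe_mul, Real.coe_toNNReal, supNorm_nonneg, lipConst_nonneg]
    using lipConst_le (hf.lipschitzWith_mul hg)

lemma lipNorm_mul_le (hf : IsBoundedLipschitz f) (hg : IsBoundedLipschitz g) :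
    lipNorm (f * g) ≤ lipNorm f * lipNorm g := by
  have hsup := supNorm_mul_le hf.bddAbove_abs hg.bddAbove_abs
  have hlip := hf.lipConst_mul_le hg
  have hcross := mul_nonneg (lipConst_nonneg f) (lipConst_nonneg g)
  unfold lipNorm
  linarith

lemma lipNorm_comp_le {g : Y → ℝ} (hg : IsBoundedLipschitz g) {S : X → Y} {K : ℝ≥0}
    (hK : 1 ≤ K) (hS : LipschitzWith K S) : lipNorm (g ∘ S) ≤ K * lipNorm g := by
  have hsup : supNorm (g ∘ S) ≤ K * supNorm g :=
    (supNorm_comp_le hg.bddAbove_abs S).trans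
      (le_mul_of_one_le_left (supNorm_nonneg g) (NNReal.one_le_coe.2 hK))
  have hlip : lipConst (g ∘ S) ≤ K * lipConst g := by
    have h := lipConst_le ((lipschitzWith_lipConst hg.lipschitz).comp hS)
    rwa [NNReal.coe_mul, Real.coe_toNNReal _ (lipConst_nonneg g), mul_comm] at h
  exact (add_le_add hsup hlip).trans_eq (mul_add _ _ _).symm

end IsBoundedLipschitz

end LipschitzNorm

lemma pow_mul_exp_neg_le {L τ σ l : ℝ} (hL : 1 ≤ L) (hτ : 0 ≤ τ) {k : ℕ} (hkl : k ≤ σ * l) :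
    L ^ k * Real.exp (-τ * (k + l)) ≤ Real.exp (-(τ - σ * Real.log L) * l) := by
  have hpow : L ^ k = Real.exp (k * Real.log L) := by
    rw [Real.exp_nat_mul, Real.exp_log (by linarith)]
  rw [hpow, ← Real.exp_add, Real.exp_le_exp]
  have hloss : k * Real.log L ≤ σ * l * Real.log L :=
    mul_le_mul_of_nonneg_right hkl (Real.log_nonneg hL)
  have hgain : 0 ≤ τ * k := by positivity
  linarith

theorem twofold_implies_partial_threefold_general
    {X : Type*} [PseudoMetricSpace X] [MeasurableSpace X] [OpensMeasurableSpace X]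
    {T : X → X} {L : ℝ} (hL : 1 ≤ L) (hT : LipschitzWith (Real.toNNReal L) T)
    {μ : Measure X} [IsProbabilityMeasure μ] {C τ : ℝ} (hC : 0 ≤ C) (hτ : 0 ≤ τ)
    (hdoc : ∀ φ ψ : X → ℝ, IsBoundedLipschitz φ → IsBoundedLipschitz ψ → ∀ n : ℕ, 1 ≤ n →
      |∫ x, φ x * ψ (T^[n] x) ∂μ - (∫ x, φ x ∂μ) * ∫ x, ψ x ∂μ|
        ≤ C * lipNorm φ * lipNorm ψ * Real.exp (-τ * n))
    {σ : ℝ} {φ₁ φ₂ φ₃ : X → ℝ} (h₁ : IsBoundedLipschitz φ₁) (h₂ : IsBoundedLipschitz φ₂)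
    (h₃ : IsBoundedLipschitz φ₃) {k l : ℕ} (hpos : 1 ≤ k + l) (hkl : k ≤ σ * l) :
    |∫ x, φ₁ x * φ₂ (T^[k] x) * φ₃ (T^[k + l] x) ∂μ
        - (∫ x, φ₁ x * φ₂ (T^[k] x) ∂μ) * ∫ x, φ₃ x ∂μ|
      ≤ C * lipNorm φ₁ * lipNorm φ₂ * lipNorm φ₃
        * Real.exp (-(τ - σ * Real.log L) * l) := by
  have hTk : LipschitzWith (Real.toNNReal L ^ k) T^[k] := hT.iterate k
  have hcomp : lipNorm (φ₂ ∘ T^[k]) ≤ L ^ k * lipNorm φ₂ := by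
    simpa only [NNReal.coe_pow, Real.coe_toNNReal L (by linarith)] using
      h₂.lipNorm_comp_le (one_le_pow₀ (Real.one_le_toNNReal.2 hL)) hTk
  have hprod : lipNorm (φ₁ * φ₂ ∘ T^[k]) ≤ lipNorm φ₁ * (L ^ k * lipNorm φ₂) :=
    (h₁.lipNorm_mul_le (h₂.comp hTk)).trans
      (mul_le_mul_of_nonneg_left hcomp (lipNorm_nonneg φ₁))
  have hn₁ := lipNorm_nonneg φ₁
  have hn₂ := lipNorm_nonneg φ₂
  have hn₃ := lipNorm_nonneg φ₃
  calc _ ≤ C * lipNorm (φ₁ * φ₂ ∘ T^[k]) * lipNorm φ₃ * Real.exp (-τ * (k + l : ℕ)) :=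
        hdoc _ φ₃ (h₁.mul (h₂.comp hTk)) h₃ (k + l) hpos
    _ ≤ C * (lipNorm φ₁ * (L ^ k * lipNorm φ₂)) * lipNorm φ₃ * Real.exp (-τ * (k + l : ℕ)) := by
        gcongr
    _ = C * lipNorm φ₁ * lipNorm φ₂ * lipNorm φ₃ * (L ^ k * Real.exp (-τ * (k + l))) := by
        push_cast; ring
    _ ≤ _ := by gcongr; exact pow_mul_exp_neg_le hL hτ hkl

/-- From two-fold exponential decay of correlations for Lipschitz observables one
obtains the partial three-fold decorrelation estimate `eq:doc:partial` for
`k ≤ σ l`, with rate `τ' = τ − σ log L`. -/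
theorem twofold_implies_partial_threefold
    {X : Type*} [MetricSpace X] [CompactSpace X] [MeasurableSpace X] [BorelSpace X]
    (T : X → X) (L : ℝ) (hL : 1 ≤ L) (hTlip : LipschitzWith (Real.toNNReal L) T)
    (μ : Measure X) [IsProbabilityMeasure μ]
    (hinv : ∀ s : Set X, MeasurableSet s → μ (T ⁻¹' s) = μ s)
    (C τ : ℝ) (hC : 0 < C) (hτ : 0 < τ)
    (hdoc : ∀ φ ψ : X → ℝ, (∃ K, LipschitzWith K φ) → (∃ K, LipschitzWith K ψ) →
      ∀ n : ℕ, 1 ≤ n →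
        |∫ x, φ x * ψ (T^[n] x) ∂μ - (∫ x, φ x ∂μ) * ∫ x, ψ x ∂μ|
          ≤ C * lipNorm φ * lipNorm ψ * Real.exp (-τ * n))
    (σ : ℝ) (hσ : σ ∈ Set.Ioc (0:ℝ) 1) (hστ : σ * Real.log L < τ) :
    ∃ C' : ℝ, 0 < C' ∧
      ∀ φ₁ φ₂ φ₃ : X → ℝ,
        (∃ K, LipschitzWith K φ₁) → (∃ K, LipschitzWith K φ₂) →
        (∃ K, LipschitzWith K φ₃) →
        ∀ k l : ℕ, 1 ≤ k → (k : ℝ) ≤ σ * l →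
          |∫ x, φ₁ x * φ₂ (T^[k] x) * φ₃ (T^[k + l] x) ∂μ
              - (∫ x, φ₁ x * φ₂ (T^[k] x) ∂μ) * ∫ x, φ₃ x ∂μ|
            ≤ C' * lipNorm φ₁ * lipNorm φ₂ * lipNorm φ₃
              * Real.exp (-(τ - σ * Real.log L) * l) := by
  exact ⟨C, hC, fun _ _ _ h₁ h₂ h₃ _ _ hk hkl => twofold_implies_partial_threefold_general hL hTlip
    hC.le hτ.le (fun _ _ hφ hψ => hdoc _ _ hφ.lipschitz hψ.lipschitz) (.of_compactSpace h₁)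
    (.of_compactSpace h₂) (.of_compactSpace h₃) (Nat.le_add_right_of_le hk) hkl⟩
end

section
/- Let a < b be reals, let S : [a, b] → ℝ be differentiable with S'(x) ≥ 3 for all x ∈ [a, b], and suppose there is p ∈ (a, b) with S(p) = p. Let r : ℝ → [0,∞) be 1-Lipschitz and suppose a − S(a) = r(a) and S(b) − b = r(b) (so S(a) < a and S(b) > b). Then d(a, p) ≤ r(p), d(S(a), p) ≤ r(a) + r(p), and the image of the open interval, S((a, b)) = (S(a), S(b)), is contained in B(a, r(a)) ∪ B(p, r(p)) ∪ B(b, r(b)), where B(x, r) = (x − r, x + r) denotes the open ball in ℝ. -/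
open Set

/-!
A map expanding by the factor `K + 2` moves a point `x` at distance `d` from its fixed point `p` by
at least `(K + 1) * d`. If `r` is `K`-Lipschitz and `r x` bounds this displacement, then
`r p ≥ r x - K * d ≥ d`. Hence the ball around `p` contains `(a, b)`, while the balls around `a` and
`b` reach to `S a` and `S b` and so contain `(S a, a]` and `[b, S b)`.
-/

/-- `f` stretches every interval with endpoints in `s` by a factor of at least `c`, preserving
orientation: the integrated form of the derivative bound `c ≤ f'`. -/
def ExpandingOn (c : ℝ) (f : ℝ → ℝ) (s : Set ℝ) : Prop :=
  ∀ x ∈ s, ∀ y ∈ s, x ≤ y → c * (y - x) ≤ f y - f x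

theorem expandingOn_of_le_hasDerivWithinAt {c : ℝ} {f f' : ℝ → ℝ} {s : Set ℝ} (hs : Convex ℝ s)
    (hf : ∀ x ∈ s, HasDerivWithinAt f (f' x) s x) (hc : ∀ x ∈ interior s, c ≤ f' x) :
    ExpandingOn c f s := by
  have hasDerivAt_interior : ∀ x ∈ interior s, HasDerivAt f (f' x) x := fun x hx =>
    (hf x (interior_subset hx)).hasDerivAt (mem_interior_iff_mem_nhds.mp hx)
  exact hs.mul_sub_le_image_sub_of_le_deriv
    (fun x hx => (hf x hx).continuousWithinAt)
    (fun x hx => (hasDerivAt_interior x hx).differentiableAt.differentiableWithinAt)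
    (fun x hx => (hasDerivAt_interior x hx).deriv.symm ▸ hc x hx)

namespace ExpandingOn

variable {c : ℝ} {f : ℝ → ℝ} {s : Set ℝ} {x y p : ℝ}

theorem strictMonoOn (hf : ExpandingOn c f s) (hc : 0 < c) : StrictMonoOn f s :=
  fun x hx y hy hxy => sub_pos.mp <|
    (mul_pos hc (sub_pos.mpr hxy)).trans_le (hf x hx y hy hxy.le)

theorem mul_dist_le_dist (hf : ExpandingOn c f s) (hx : x ∈ s) (hy : y ∈ s) :
    c * dist x y ≤ dist (f x) (f y) := by
  wlog hxy : x ≤ y generalizing x y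
  · simpa only [dist_comm] using this hy hx (le_of_not_ge hxy)
  · rw [dist_comm x, dist_comm (f x), Real.dist_eq, Real.dist_eq,
      abs_of_nonneg (sub_nonneg.mpr hxy)]
    exact (hf x hx y hy hxy).trans (le_abs_self _)

theorem mul_dist_fixedPt_le_dist_self (hf : ExpandingOn c f s) (hx : x ∈ s) (hp : p ∈ s)
    (hfix : f.IsFixedPt p) : (c - 1) * dist x p ≤ dist (f x) x := by
  have expansion : c * dist x p ≤ dist (f x) p := by
    simpa only [hfix.eq] using hf.mul_dist_le_dist hx hp
  linarith [dist_triangle (f x) x p]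

theorem dist_fixedPt_le_of_lipschitzOnWith {K : NNReal} {r : ℝ → ℝ} (hf : ExpandingOn (K + 2) f s)
    (hr : LipschitzOnWith K r s) (hx : x ∈ s) (hp : p ∈ s) (hfix : f.IsFixedPt p)
    (hrx : dist (f x) x ≤ r x) : dist x p ≤ r p := by
  have displacement := hf.mul_dist_fixedPt_le_dist_self hx hp hfix
  have lipschitz : r x ≤ r p + K * dist x p := hr.le_add_mul hx hp
  linarith

end ExpandingOn

theorem Ioo_subset_three_balls {u v a b p ra rb rp : ℝ} (ha : dist u a ≤ ra) (hb : dist v b ≤ rb)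
    (hap : dist a p ≤ rp) (hbp : dist b p ≤ rp) :
    Ioo u v ⊆ Metric.ball a ra ∪ Metric.ball p rp ∪ Metric.ball b rb := by
  rintro y ⟨huy, hyv⟩
  simp only [Real.dist_eq, abs_le] at ha hb hap hbp
  simp only [mem_union, Real.ball_eq_Ioo, mem_Ioo]
  rcases le_or_gt y a with hya | hay
  · exact .inl (.inl ⟨by linarith, by linarith⟩)
  rcases lt_or_ge y b with hyb | hby
  · exact .inl (.inr ⟨by linarith, by linarith⟩)
  · exact .inr ⟨by linarith, by linarith⟩

theorem three_balls_cover_general {a b p : ℝ} {S r : ℝ → ℝ} {K : NNReal}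
    (hcont : ContinuousOn S (Icc a b)) (hexp : ExpandingOn (K + 2) S (Icc a b))
    (hp : p ∈ Icc a b) (hfix : S.IsFixedPt p) (hr : LipschitzOnWith K r (Icc a b))
    (hra : dist (S a) a ≤ r a) (hrb : dist (S b) b ≤ r b) :
    dist a p ≤ r p ∧ dist (S a) p ≤ r a + r p ∧
      S '' Ioo a b = Ioo (S a) (S b) ∧
      S '' Ioo a b ⊆ Metric.ball a (r a) ∪ Metric.ball p (r p) ∪ Metric.ball b (r b) := by
  have hab : a ≤ b := hp.1.trans hp.2
  have hap : dist a p ≤ r p :=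
    hexp.dist_fixedPt_le_of_lipschitzOnWith hr (left_mem_Icc.mpr hab) hp hfix hra
  have hbp : dist b p ≤ r p :=
    hexp.dist_fixedPt_le_of_lipschitzOnWith hr (right_mem_Icc.mpr hab) hp hfix hrb
  have image_eq : S '' Ioo a b = Ioo (S a) (S b) :=
    hcont.image_Ioo_of_strictMonoOn hab (hexp.strictMonoOn (by positivity))
  exact ⟨hap, (dist_triangle _ a _).trans (add_le_add hra hap), image_eq,
    image_eq.trans_subset (Ioo_subset_three_balls hra hrb hap hbp)⟩

/-- Geometric covering step (`T' > 0` case of Lemma 5.1 / `lem:srt:interval`):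
the image of the recurrence interval `(a,b)` under the expanding fixed-point map `S`
is covered by the three balls `B(a, r(a)) ∪ B(p, r(p)) ∪ B(b, r(b))`. -/
theorem three_balls_cover
    (a b : ℝ) (hab : a < b) (S S' : ℝ → ℝ)
    (hS : ∀ x ∈ Set.Icc a b, HasDerivWithinAt S (S' x) (Set.Icc a b) x)
    (hS3 : ∀ x ∈ Set.Icc a b, 3 ≤ S' x)
    (p : ℝ) (hp : p ∈ Set.Ioo a b) (hfix : S p = p)
    (r : ℝ → ℝ) (hrnn : ∀ x, 0 ≤ r x) (hrlip : LipschitzWith 1 r)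
    (hra : a - S a = r a) (hrb : S b - b = r b) :
    |a - p| ≤ r p ∧ |S a - p| ≤ r a + r p ∧
      S '' Set.Ioo a b = Set.Ioo (S a) (S b) ∧
      S '' Set.Ioo a b ⊆
        Metric.ball a (r a) ∪ Metric.ball p (r p) ∪ Metric.ball b (r b) := by
  have hexp : ExpandingOn ((1 : NNReal) + 2) S (Icc a b) :=
    expandingOn_of_le_hasDerivWithinAt (convex_Icc a b) hS fun x hx => by
      linarith [hS3 x (interior_subset hx), NNReal.coe_one]
  exact three_balls_cover_general (fun x hx => (hS x hx).continuousWithinAt) hexp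
    (Ioo_subset_Icc_self hp) hfix hrlip.lipschitzOnWith
    (by rw [dist_comm, Real.dist_eq, hra, abs_of_nonneg (hrnn a)])
    (by rw [Real.dist_eq, hrb, abs_of_nonneg (hrnn b)])
end

section
/- Let (X, d) be a compact metric space and μ a Borel probability measure on X satisfying the thin annuli assumption with constants C₀, α₀, r₀ > 0. Let (M_k) be a sequence in (0,1] converging to 0, let r_k : X → [0,∞) be 1-Lipschitz with μ(B(x, r_k(x))) = M_k for all x in the support of μ, let T : X → X be measurable, set E_k = {x ∈ X : T^k x ∈ B(x, r_k(x))}, and suppose |μ(E_k) − M_k| ≤ C₀ e^{−η₀ k} for some η₀ > 0 and all k. Fix η > 0 and define Z_k = {(x, y) ∈ X × X : y ∈ B(x, r_k(x))} and f_k(x, y) = max{0, 1 − e^{ηk} · dist((x, y), Z_k)}, where X × X carries the max metric. Then there exist constants C > 0 and η' > 0 (one may take η' = min{η₀, α₀η}) such that for all sufficiently large k: (i) 1_{B(x, r_k(x))}(y) ≤ f_k(x, y) ≤ 1 for all x, y; (ii) f_k is Lipschitz with ‖f_k‖_Lip ≤ C e^{ηk}; (iii) |∫_X f_k(x, y) dμ(y)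 − μ(E_k)| ≤ C e^{−η' k} for every x in the support of μ. -/
/-!
Write `δ = e^{-ηk}`. If `f_k(x, y) > 0`, then some `(x', y') ∈ Z_k` is `δ`-close to `(x, y)`, and
since `r_k` is 1-Lipschitz, `d(x, y) < r_k(x) + 3δ`. Hence `f_k(x, ·)` lies between the indicators
of the balls of radius `r_k(x)` and `r_k(x) + 3δ`, and `∫ f_k(x, ·) dμ` exceeds `M_k` by at most the
measure of the annulus between them.

The thin annuli assumption bounds this annulus directly only if `3δ ≤ r_k(x) ≤ r₀`. The upper bound
holds for all large `k`, uniformly over the support: by total boundedness, balls of radius `r₀`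
centred in the support have measure bounded below, while `M_k → 0`. When `r_k(x) < 3δ`, the annulus
is covered by dyadic annuli around `x`, whose measures sum to a geometric series; finitely many
suffice because `M_k > 0` forces `r_k(x) > 0`. The remaining error `|M_k - μ(E_k)|` is exponentially
small by hypothesis.
-/

open MeasureTheory Set Filter

/-- The (topological) support of a measure on a metric space. -/
def msupport {X : Type*} [PseudoMetricSpace X] [MeasurableSpace X]
    (μ : Measure X) : Set X :=
  {x : X | ∀ r : ℝ, 0 < r → 0 < μ (Metric.ball x r)}

open Metric Topology NNReal

section ThinAnnuli

variable {X : Type*} [PseudoMetricSpace X] [MeasurableSpace X] {μ : Measure X}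
  {C α R : ℝ} {x : X}

/-- The thin annuli condition at a single centre `x`, with constant `C`, exponent `α` and
radii up to `R`. Only annuli at most as thick as their inner radius are constrained. -/
def ThinAnnuliAt (μ : Measure X) (C α R : ℝ) (x : X) : Prop :=
  ∀ ε r : ℝ, 0 < ε → ε ≤ r → r ≤ R → μ.real (ball x (r + ε) \ ball x r) ≤ C * ε ^ α

lemma one_sub_half_rpow_pos (hα : 0 < α) : 0 < 1 - (1 / 2 : ℝ) ^ α :=
  sub_pos.2 (Real.rpow_lt_one (by norm_num) (by norm_num) hα)

namespace ThinAnnuliAt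

variable [IsFiniteMeasure μ]

-- `C / (1 - 2^{-α})` is the fixed point of `A ↦ C + A 2^{-α}`, so peeling off the outermost
-- annulus preserves the bound.
lemma measureReal_dyadic_annulus_le (h : ThinAnnuliAt μ C α R x) (hC : 0 ≤ C) (hα : 0 < α)
    (n : ℕ) {ρ : ℝ} (hρ : 0 < ρ) (hρR : ρ ≤ R) :
    μ.real (ball x (2 * ρ) \ ball x (2 * ρ / 2 ^ n)) ≤ C / (1 - (1 / 2 : ℝ) ^ α) * ρ ^ α := by
  have hgap := one_sub_half_rpow_pos hα
  induction n generalizing ρ with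
  | zero =>
    simp only [pow_zero, div_one, sdiff_self, measureReal_empty]
    positivity
  | succ n ih =>
    have outer : μ.real (ball x (2 * ρ) \ ball x ρ) ≤ C * ρ ^ α := by
      simpa only [two_mul] using h ρ ρ hρ le_rfl hρR
    have inner : μ.real (ball x ρ \ ball x (2 * ρ / 2 ^ (n + 1)))
        ≤ C / (1 - (1 / 2 : ℝ) ^ α) * ((1 / 2 : ℝ) ^ α * ρ ^ α) := by
      rw [← Real.mul_rpow (by norm_num) hρ.le]
      convert ih (ρ := 1 / 2 * ρ) (by positivity) (by linarith) using 4
      · ring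
      · field_simp
        ring
    calc μ.real (ball x (2 * ρ) \ ball x (2 * ρ / 2 ^ (n + 1)))
        ≤ μ.real (ball x (2 * ρ) \ ball x ρ)
            + μ.real (ball x ρ \ ball x (2 * ρ / 2 ^ (n + 1))) :=
          (measureReal_mono (sdiff_triangle ..)).trans (measureReal_union_le _ _)
      _ ≤ C * ρ ^ α + C / (1 - (1 / 2 : ℝ) ^ α) * ((1 / 2 : ℝ) ^ α * ρ ^ α) :=
          add_le_add outer inner
      _ = C / (1 - (1 / 2 : ℝ) ^ α) * ρ ^ α := by
          field_simp
          ring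

lemma measureReal_annulus_le (h : ThinAnnuliAt μ C α R x) (hC : 0 ≤ C) (hα : 0 < α)
    {ε r : ℝ} (hε : 0 < ε) (hεR : ε ≤ R) (hr : 0 < r) (hrR : r ≤ R) :
    μ.real (ball x (r + ε) \ ball x r) ≤ C / (1 - (1 / 2 : ℝ) ^ α) * ε ^ α := by
  rcases le_total ε r with hεr | hrε
  · have hgap_le : 1 - (1 / 2 : ℝ) ^ α ≤ 1 := sub_le_self _ (by positivity)
    exact (h ε r hε hεr hrR).trans <| mul_le_mul_of_nonneg_right
      (le_div_self hC (one_sub_half_rpow_pos hα) hgap_le) (by positivity)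
  · obtain ⟨n, hn⟩ := pow_unbounded_of_one_lt (2 * ε / r) one_lt_two
    have hinner : 2 * ε / 2 ^ n ≤ r := ((div_lt_comm₀ hr (by positivity)).1 hn).le
    have hsub : ball x (r + ε) \ ball x r ⊆ ball x (2 * ε) \ ball x (2 * ε / 2 ^ n) :=
      sdiff_subset_sdiff (ball_subset_ball (by linarith)) (ball_subset_ball hinner)
    exact (measureReal_mono hsub).trans (h.measureReal_dyadic_annulus_le hC hα n hε hεR)

end ThinAnnuliAt

end ThinAnnuli

lemma eventually_forall_msupport_lt_measureReal_ball {X ι : Type*} [PseudoMetricSpace X]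
    [MeasurableSpace X] {μ : Measure X} [IsFiniteMeasure μ] (hμ : TotallyBounded (msupport μ))
    {R : ℝ} (hR : 0 < R) {l : Filter ι} {M : ι → ℝ} (hM : Tendsto M l (𝓝 0)) :
    ∀ᶠ i in l, ∀ x ∈ msupport μ, M i < μ.real (ball x R) := by
  obtain ⟨t, ht, htfin, hcover⟩ := finite_approx_of_totallyBounded hμ (R / 2) (half_pos hR)
  have hcentres : ∀ᶠ i in l, ∀ c ∈ t, M i < μ.real (ball c (R / 2)) :=
    (eventually_all_finite htfin).2 fun c hc =>
      hM.eventually_lt_const (ENNReal.toReal_pos (ht hc _ (half_pos hR)).ne' (measure_ne_top _ _))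
  filter_upwards [hcentres] with i hi x hx
  obtain ⟨c, hc, hxc⟩ := mem_iUnion₂.1 (hcover hx)
  have hsub : ball c (R / 2) ⊆ ball x R :=
    ball_subset_ball' (by linarith [mem_ball'.1 hxc])
  exact (hi c hc).trans_le (measureReal_mono hsub)

lemma eventually_forall_msupport_radius_mem_Ioc {X ι : Type*} [PseudoMetricSpace X]
    [MeasurableSpace X] {μ : Measure X} [IsFiniteMeasure μ] (hμ : TotallyBounded (msupport μ))
    {R : ℝ} (hR : 0 < R) {l : Filter ι} {M : ι → ℝ} (hMpos : ∀ i, 0 < M i)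
    (hMlim : Tendsto M l (𝓝 0)) {r : ι → X → ℝ}
    (hr : ∀ i, ∀ x ∈ msupport μ, μ.real (ball x (r i x)) = M i) :
    ∀ᶠ i in l, ∀ x ∈ msupport μ, r i x ∈ Ioc 0 R := by
  filter_upwards [eventually_forall_msupport_lt_measureReal_ball hμ hR hMlim] with i hi x hx
  constructor
  · by_contra! hle
    have hM := hr i x hx
    rw [ball_eq_empty.2 hle, measureReal_empty] at hM
    exact (hMpos i).ne hM
  · by_contra! hlt
    have hmono : μ.real (ball x R) ≤ μ.real (ball x (r i x)) :=
      measureReal_mono (ball_subset_ball hlt.le)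
    exact (hi x hx).not_ge (hmono.trans_eq (hr i x hx))

lemma lipNorm_le {X : Type*} [PseudoMetricSpace X] {f : X → ℝ} {B K : ℝ} (hB : 0 ≤ B)
    (hfB : ∀ x, |f x| ≤ B) (hK : 0 ≤ K) (hfK : LipschitzWith K.toNNReal f) :
    lipNorm f ≤ B + K :=
  add_le_add (Real.iSup_le hfB hB) (csInf_le ⟨0, fun _ h => h.1⟩ ⟨hK, hfK⟩)

lemma abs_integral_sub_measureReal_le_of_indicator_le {X : Type*} [MeasurableSpace X]
    {μ : Measure X} [IsFiniteMeasure μ] {s t : Set X} (hs : MeasurableSet s)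
    (ht : MeasurableSet t) (hst : s ⊆ t) {f : X → ℝ} (hf : AEStronglyMeasurable f μ)
    (hsf : s.indicator 1 ≤ f) (hft : f ≤ t.indicator 1) :
    |∫ y, f y ∂μ - μ.real s| ≤ μ.real (t \ s) := by
  have hs_int : Integrable (s.indicator (1 : X → ℝ)) μ := (integrable_const 1).indicator hs
  have ht_int : Integrable (t.indicator (1 : X → ℝ)) μ := (integrable_const 1).indicator ht
  have hf_int : Integrable f μ :=
    integrable_of_le_of_le hf (ae_of_all _ hsf) (ae_of_all _ hft) hs_int ht_int
  have lower : μ.real s ≤ ∫ y, f y ∂μ :=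
    (integral_indicator_one hs).symm.trans_le (integral_mono hs_int hf_int hsf)
  have upper : ∫ y, f y ∂μ ≤ μ.real t :=
    (integral_mono hf_int ht_int hft).trans_eq (integral_indicator_one ht)
  rw [abs_of_nonneg (sub_nonneg.2 lower), measureReal_sdiff hst hs]
  exact sub_le_sub_right upper _

section LipschitzBump

/-- The function `max {0, 1 - L dist(·, Z)}`, which equals `1` on `Z` and falls off with slope `L`.
Since `infDist p ∅ = 0`, it is identically `1` when `Z` is empty. -/
noncomputable def lipschitzBump {Y : Type*} [PseudoMetricSpace Y] (L : ℝ) (Z : Set Y) (p : Y) : ℝ :=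
  max 0 (1 - L * infDist p Z)

section General

variable {Y : Type*} [PseudoMetricSpace Y] {L : ℝ}

lemma lipschitzBump_nonneg (L : ℝ) (Z : Set Y) (p : Y) : 0 ≤ lipschitzBump L Z p :=
  le_max_left _ _

lemma lipschitzBump_le_one (hL : 0 ≤ L) (Z : Set Y) (p : Y) : lipschitzBump L Z p ≤ 1 :=
  max_le zero_le_one (sub_le_self _ (mul_nonneg hL infDist_nonneg))

lemma lipschitzBump_of_mem (L : ℝ) {Z : Set Y} {p : Y} (hp : p ∈ Z) :
    lipschitzBump L Z p = 1 := by
  simp [lipschitzBump, infDist_zero_of_mem hp]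

lemma infDist_lt_inv_of_lipschitzBump_pos (hL : 0 < L) {Z : Set Y} {p : Y}
    (hp : 0 < lipschitzBump L Z p) : infDist p Z < L⁻¹ := by
  have hlt : 0 < 1 - L * infDist p Z := (lt_max_iff.1 hp).resolve_left (lt_irrefl 0)
  rw [← mul_one L⁻¹, lt_inv_mul_iff₀ hL]
  linarith

lemma lipschitzWith_lipschitzBump (hL : 0 ≤ L) (Z : Set Y) :
    LipschitzWith L.toNNReal (lipschitzBump L Z) := by
  have hscaled : LipschitzWith (‖L‖₊ * 1) fun p => L * infDist p Z :=
    (lipschitzWith_smul L).comp (lipschitz_infDist_pt Z)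
  have hbump : LipschitzWith (0 + ‖L‖₊ * 1) (lipschitzBump L Z) :=
    ((LipschitzWith.const 1).sub hscaled).const_max 0
  rwa [zero_add, mul_one, ← Real.toNNReal_eq_nnnorm_of_nonneg hL] at hbump

lemma lipNorm_lipschitzBump_le (hL : 0 ≤ L) (Z : Set Y) : lipNorm (lipschitzBump L Z) ≤ 1 + L :=
  lipNorm_le zero_le_one
    (fun p => (abs_of_nonneg (lipschitzBump_nonneg L Z p)).trans_le (lipschitzBump_le_one hL Z p))
    hL (lipschitzWith_lipschitzBump hL Z)

end General

variable {X : Type*} [PseudoMetricSpace X] {ρ : X → ℝ} {K : ℝ≥0} {L : ℝ} {x : X}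

/-- The set `Z` of pairs `(x, y)` with `y ∈ B(x, ρ(x))`, the target of a recurrence problem with
radius function `ρ`. -/
def ballBundle (ρ : X → ℝ) : Set (X × X) :=
  {p | p.2 ∈ ball p.1 (ρ p.1)}

lemma indicator_ball_le_lipschitzBump (ρ : X → ℝ) (L : ℝ) (x y : X) :
    (ball x (ρ x)).indicator 1 y ≤ lipschitzBump L (ballBundle ρ) (x, y) :=
  indicator_apply_le' (fun hy => (lipschitzBump_of_mem L (p := (x, y)) hy).ge)
    fun _ => lipschitzBump_nonneg L _ _

lemma dist_lt_of_infDist_ballBundle_lt (hρ : LipschitzWith K ρ) {y : X} {δ : ℝ}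
    (hne : (ballBundle ρ).Nonempty) (hδ : infDist (x, y) (ballBundle ρ) < δ) :
    dist y x < ρ x + (2 + K) * δ := by
  obtain ⟨⟨x', y'⟩, hmem, hclose⟩ := (infDist_lt_iff hne).1 hδ
  obtain ⟨hx, hy⟩ : dist x x' < δ ∧ dist y y' < δ := max_lt_iff.1 hclose
  have hy'x' : dist y' x' < ρ x' := hmem
  have hρx' : ρ x' ≤ ρ x + K * δ :=
    (hρ.le_add_mul x' x).trans (by rw [dist_comm]; gcongr)
  calc dist y x ≤ dist y y' + dist y' x' + dist x' x := dist_triangle4 ..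
    _ < δ + (ρ x + K * δ) + δ := by rw [dist_comm x' x]; linarith
    _ = ρ x + (2 + K) * δ := by ring

lemma lipschitzBump_le_indicator_ball (hρ : LipschitzWith K ρ) (hL : 0 < L) (hx : 0 < ρ x)
    (y : X) :
    lipschitzBump L (ballBundle ρ) (x, y) ≤ (ball x (ρ x + (2 + K) * L⁻¹)).indicator 1 y := by
  refine le_indicator_apply (fun _ => lipschitzBump_le_one hL.le _ _) fun hy => ?_
  contrapose! hy
  exact dist_lt_of_infDist_ballBundle_lt hρ ⟨(x, x), mem_ball_self hx⟩
    (infDist_lt_inv_of_lipschitzBump_pos hL hy)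

variable [MeasurableSpace X] [OpensMeasurableSpace X] {μ : Measure X} [IsFiniteMeasure μ]

lemma abs_integral_lipschitzBump_sub_le (hρ : LipschitzWith K ρ) (hL : 0 < L) (hx : 0 < ρ x) :
    |∫ y, lipschitzBump L (ballBundle ρ) (x, y) ∂μ - μ.real (ball x (ρ x))|
      ≤ μ.real (ball x (ρ x + (2 + K) * L⁻¹) \ ball x (ρ x)) := by
  have hcont : Continuous fun y => lipschitzBump L (ballBundle ρ) (x, y) :=
    (lipschitzWith_lipschitzBump hL.le _).continuous.comp (Continuous.prodMk_right x)
  exact abs_integral_sub_measureReal_le_of_indicator_le measurableSet_ball measurableSet_ball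
    (ball_subset_ball (le_add_of_nonneg_right (by positivity))) hcont.aestronglyMeasurable
    (indicator_ball_le_lipschitzBump ρ L x) (lipschitzBump_le_indicator_ball hρ hL hx)

lemma ThinAnnuliAt.abs_integral_lipschitzBump_exp_sub_le {C α R : ℝ}
    (h : ThinAnnuliAt μ C α R x) (hC : 0 ≤ C) (hα : 0 < α) (hρ : LipschitzWith K ρ)
    (hx : 0 < ρ x) (hxR : ρ x ≤ R) {t : ℝ} (ht : (2 + K) * Real.exp (-t) ≤ R) :
    |∫ y, lipschitzBump (Real.exp t) (ballBundle ρ) (x, y) ∂μ - μ.real (ball x (ρ x))|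
      ≤ C / (1 - (1 / 2 : ℝ) ^ α) * (2 + K) ^ α * Real.exp (-(α * t)) := by
  have hsandwich := abs_integral_lipschitzBump_sub_le (μ := μ) hρ (Real.exp_pos t) hx
  rw [← Real.exp_neg] at hsandwich
  calc _ ≤ C / (1 - (1 / 2 : ℝ) ^ α) * ((2 + K) * Real.exp (-t)) ^ α :=
        hsandwich.trans (h.measureReal_annulus_le hC hα (by positivity) ht hx hxR)
    _ = _ := by
        rw [Real.mul_rpow (by positivity) (by positivity), ← Real.exp_mul, mul_assoc,
          neg_mul, mul_comm t]

end LipschitzBump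

lemma mul_exp_add_mul_exp_le {A B : ℝ} (hA : 0 ≤ A) (hB : 0 ≤ B) (a b : ℝ) {t : ℝ} (ht : 0 ≤ t) :
    A * Real.exp (-a * t) + B * Real.exp (-b * t) ≤ (A + B) * Real.exp (-min a b * t) := by
  rw [add_mul]
  gcongr
  · exact min_le_left a b
  · exact min_le_right a b

/-- Here `a k` stands for `μ(E_k)`. -/
theorem lipschitz_approximation_general {X : Type*} [PseudoMetricSpace X] [MeasurableSpace X]
    [OpensMeasurableSpace X] {μ : Measure X} [IsFiniteMeasure μ]
    (hμ : TotallyBounded (msupport μ)) {C₀ α₀ r₀ : ℝ} (hC₀ : 0 ≤ C₀) (hα₀ : 0 < α₀) (hr₀ : 0 < r₀)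
    (hannuli : ∀ x ∈ msupport μ, ThinAnnuliAt μ C₀ α₀ r₀ x)
    {M : ℕ → ℝ} (hMpos : ∀ k, 0 < M k) (hMlim : Tendsto M atTop (𝓝 0))
    {r : ℕ → X → ℝ} {K : ℝ≥0} (hrlip : ∀ k, LipschitzWith K (r k))
    (hrmeas : ∀ k, ∀ x ∈ msupport μ, μ.real (ball x (r k x)) = M k)
    {a : ℕ → ℝ} {C₁ η₀ : ℝ} (ha : ∀ k, |a k - M k| ≤ C₁ * Real.exp (-η₀ * k))
    {η : ℝ} (hη : 0 < η) :
    ∃ C : ℝ, 0 < C ∧ ∀ᶠ k : ℕ in atTop,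
      (∀ x y, (ball x (r k x)).indicator 1 y
            ≤ lipschitzBump (Real.exp (η * k)) (ballBundle (r k)) (x, y) ∧
          lipschitzBump (Real.exp (η * k)) (ballBundle (r k)) (x, y) ≤ 1) ∧
        ((∃ K', LipschitzWith K' (lipschitzBump (Real.exp (η * k)) (ballBundle (r k)))) ∧
          lipNorm (lipschitzBump (Real.exp (η * k)) (ballBundle (r k))) ≤ C * Real.exp (η * k)) ∧
        ∀ x ∈ msupport μ,
          |∫ y, lipschitzBump (Real.exp (η * k)) (ballBundle (r k)) (x, y) ∂μ - a k|
            ≤ C * Real.exp (-min η₀ (α₀ * η) * k) := by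
  set A := C₀ / (1 - (1 / 2 : ℝ) ^ α₀) * (2 + K) ^ α₀
  have hA : 0 ≤ A := mul_nonneg (div_nonneg hC₀ (one_sub_half_rpow_pos hα₀).le) (by positivity)
  have hC₁ : 0 ≤ C₁ := nonneg_of_mul_nonneg_left ((abs_nonneg _).trans (ha 0)) (Real.exp_pos _)
  have hδ : Tendsto (fun k : ℕ => (2 + K) * Real.exp (-(η * k))) atTop (𝓝 0) := by
    simpa only [mul_zero, Function.comp_def] using (Real.tendsto_exp_neg_atTop_nhds_zero.comp
      (tendsto_natCast_atTop_atTop.const_mul_atTop hη)).const_mul (2 + K : ℝ)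
  refine ⟨2 + (C₁ + A), by positivity, ?_⟩
  filter_upwards [eventually_forall_msupport_radius_mem_Ioc hμ hr₀ hMpos hMlim hrmeas,
    hδ.eventually_le_const hr₀] with k hrk hδk
  refine ⟨fun x y => ⟨indicator_ball_le_lipschitzBump _ _ x y,
    lipschitzBump_le_one (Real.exp_nonneg _) _ _⟩,
    ⟨⟨_, lipschitzWith_lipschitzBump (Real.exp_nonneg _) _⟩, ?_⟩, fun x hx => ?_⟩
  · have hone : 1 ≤ Real.exp (η * k) := Real.one_le_exp (by positivity)
    have hrest : 0 ≤ (C₁ + A) * Real.exp (η * k) := by positivity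
    linarith [lipNorm_lipschitzBump_le (Real.exp_nonneg (η * k)) (ballBundle (r k))]
  · obtain ⟨hrpos, hrle⟩ := hrk x hx
    have happrox := (hannuli x hx).abs_integral_lipschitzBump_exp_sub_le hC₀ hα₀ (hrlip k)
      hrpos hrle hδk
    rw [hrmeas k x hx, ← mul_assoc, ← neg_mul] at happrox
    calc _ ≤ |a k - M k|
            + |∫ y, lipschitzBump (Real.exp (η * k)) (ballBundle (r k)) (x, y) ∂μ - M k| := by
          rw [add_comm, abs_sub_comm (a k)]
          exact abs_sub_le _ _ _
      _ ≤ C₁ * Real.exp (-η₀ * k) + A * Real.exp (-(α₀ * η) * k) := add_le_add (ha k) happrox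
      _ ≤ (C₁ + A) * Real.exp (-min η₀ (α₀ * η) * k) :=
          mul_exp_add_mul_exp_le hC₁ hA _ _ k.cast_nonneg
      _ ≤ _ := mul_le_mul_of_nonneg_right (by linarith) (Real.exp_nonneg _)

/-- The Lipschitz approximations `f_k` of the indicator of the recurrence target:
`f_k(x,y) = max {0, 1 − e^{ηk} dist((x,y), Z_k)}` dominates
`1_{B(x, r_k(x))}(y)`, has Lipschitz norm `≤ C e^{ηk}`, and for `x` in the
support of `μ`, `∫ f_k(x, y) dμ(y) = μ(E_k) + O(e^{−η' k})`. -/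
theorem lipschitz_approximation
    {X : Type*} [MetricSpace X] [CompactSpace X] [MeasurableSpace X] [BorelSpace X]
    (μ : Measure X) [IsProbabilityMeasure μ]
    -- thin annuli assumption
    (C₀ α₀ r₀ : ℝ) (hC₀ : 0 < C₀) (hα₀ : 0 < α₀) (hr₀ : 0 < r₀)
    (hannuli : ∀ (x : X) (ε r : ℝ), 0 < ε → ε ≤ r → r ≤ r₀ →
      (μ (Metric.ball x (r + ε) \ Metric.ball x r)).toReal ≤ C₀ * ε ^ α₀)
    -- the sequence (M_k) and the radii r_k
    (M : ℕ → ℝ) (hMpos : ∀ k, 0 < M k) (hM1 : ∀ k, M k ≤ 1)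
    (hMlim : Tendsto M atTop (nhds 0))
    (r : ℕ → X → ℝ) (hrnn : ∀ k x, 0 ≤ r k x) (hrlip : ∀ k, LipschitzWith 1 (r k))
    (hrmeas : ∀ k, ∀ x ∈ msupport μ,
      (μ (Metric.ball x (r k x))).toReal = M k)
    (T : X → X) (hT : Measurable T)
    (η₀ : ℝ) (hη₀ : 0 < η₀)
    (hEk : ∀ k : ℕ,
      |(μ {x : X | T^[k] x ∈ Metric.ball x (r k x)}).toReal - M k|
        ≤ C₀ * Real.exp (-η₀ * k))
    (η : ℝ) (hη : 0 < η) :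
    ∃ C η' : ℝ, 0 < C ∧ 0 < η' ∧ ∃ k₀ : ℕ, ∀ k : ℕ, k₀ ≤ k →
      ((∀ x y : X,
          (Metric.ball x (r k x)).indicator (fun _ => (1:ℝ)) y
              ≤ max 0 (1 - Real.exp (η * k)
                  * Metric.infDist (x, y) {p : X × X | p.2 ∈ Metric.ball p.1 (r k p.1)})
            ∧ max 0 (1 - Real.exp (η * k)
                  * Metric.infDist (x, y) {p : X × X | p.2 ∈ Metric.ball p.1 (r k p.1)})
              ≤ 1) ∧
        ((∃ K, LipschitzWith K (fun p : X × X => max 0 (1 - Real.exp (η * k)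
              * Metric.infDist p {q : X × X | q.2 ∈ Metric.ball q.1 (r k q.1)}))) ∧
          lipNorm (fun p : X × X => max 0 (1 - Real.exp (η * k)
              * Metric.infDist p {q : X × X | q.2 ∈ Metric.ball q.1 (r k q.1)}))
            ≤ C * Real.exp (η * k)) ∧
        (∀ x ∈ msupport μ,
          |(∫ y, max 0 (1 - Real.exp (η * k)
                * Metric.infDist (x, y) {p : X × X | p.2 ∈ Metric.ball p.1 (r k p.1)}) ∂μ)
              - (μ {z : X | T^[k] z ∈ Metric.ball z (r k z)}).toReal|
            ≤ C * Real.exp (-η' * k))) := by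
  obtain ⟨C, hC, happrox⟩ := lipschitz_approximation_general
    (isCompact_univ.totallyBounded.subset (subset_univ (msupport μ))) hC₀.le hα₀ hr₀
    (fun x _ => hannuli x) hMpos hMlim hrlip hrmeas hEk hη
  exact ⟨C, min η₀ (α₀ * η), hC, by positivity, eventually_atTop.1 happrox⟩
end

section
/- Let (X, d) be a compact metric space and μ a Borel probability measure on X satisfying the Frostman assumption and the thin annuli assumption. Then there exists M₀ > 0 such that for every M ∈ (0, M₀], the function r_M(x) = inf{r ≥ 0 : μ(B(x, r)) ≥ M} satisfies μ(B(x, r_M(x))) = M for every x in the support of μ, and x ↦ r_M(x) is Lipschitz continuous on X with Lipschitz constant 1. -/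
/-!
For every `x` and `0 ≤ M < μ(X)`, the radius `R = r_M(x)` satisfies
`μ(ball x R) ≤ M ≤ μ(closedBall x R)`, by continuity of `μ` from below and from above. Hence
`μ(ball x R) = M` as soon as the sphere of radius `R` about `x` is null. The Frostman bound makes
the sphere of radius `0` null, and the thin annuli bound those of radius in `(0, r₀]`.

It remains to choose `M₀` so that `r_M ≤ r₀` on the support for all `M ≤ M₀`. By total boundedness,
finitely many balls of radius `r₀ / 2` centred in the support cover it; each has positive mass, and
every `ball x r₀` with `x` in the support contains one of them.

The Lipschitz bound holds because `ball y r ⊆ ball x (r + dist x y)`.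
-/

open MeasureTheory Set Filter

/-- The radius `r_M(x) = inf {r ≥ 0 : μ(B(x,r)) ≥ M}`. -/
noncomputable def rad {X : Type*} [PseudoMetricSpace X] [MeasurableSpace X]
    (μ : Measure X) (M : ℝ) (x : X) : ℝ :=
  sInf {r : ℝ | 0 ≤ r ∧ M ≤ (μ (Metric.ball x r)).toReal}

section Balls

open Metric
open scoped Topology

variable {X : Type*} [PseudoMetricSpace X] [MeasurableSpace X] {μ : Measure X} {x : X}

lemma measure_ball_le_of_forall_lt {R : ℝ} {c : ENNReal} (h : ∀ r < R, μ (ball x r) ≤ c) :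
    μ (ball x R) ≤ c := by
  obtain ⟨u, hu, hu_lt, hu_lim⟩ := exists_seq_strictMono_tendsto R
  have ball_eq_iUnion : ball x R = ⋃ n, ball x (u n) := by
    ext y
    simp only [mem_ball, mem_iUnion]
    exact ⟨fun hy => (hu_lim.eventually (lt_mem_nhds hy)).exists,
      fun ⟨n, hn⟩ => hn.trans (hu_lt n)⟩
  have ball_mono : Monotone fun n => ball x (u n) :=
    fun _ _ hmn => ball_subset_ball (hu.monotone hmn)
  rw [ball_eq_iUnion, ball_mono.measure_iUnion]
  exact iSup_le fun n => h (u n) (hu_lt n)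

lemma le_measure_closedBall_of_forall_gt [OpensMeasurableSpace X] [IsFiniteMeasure μ] {R : ℝ}
    {c : ENNReal} (h : ∀ r > R, c ≤ μ (ball x r)) : c ≤ μ (closedBall x R) := by
  have hlim : Tendsto (μ ∘ ball x) (𝓝[>] R) (𝓝 (μ (⋂ r > R, ball x r))) :=
    tendsto_measure_biInter_gt (fun _ _ => measurableSet_ball.nullMeasurableSet)
      (fun _ _ _ hij => ball_subset_ball hij) ⟨R + 1, lt_add_one R, measure_ne_top _ _⟩
  rw [biInter_gt_ball] at hlim
  exact ge_of_tendsto hlim (eventually_mem_nhdsWithin.mono h)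

lemma exists_nonneg_le_measureReal_ball [IsFiniteMeasure μ] {M : ℝ} (hM : M < μ.real univ)
    (x : X) : ∃ r : ℝ, 0 ≤ r ∧ M ≤ μ.real (ball x r) := by
  have ball_mono : Monotone fun n : ℕ => ball x (n : ℝ) :=
    fun _ _ hmn => ball_subset_ball (Nat.cast_le.2 hmn)
  have hlim : Tendsto (fun n : ℕ => μ.real (ball x n)) atTop (𝓝 (μ.real univ)) := by
    rw [← iUnion_ball_nat x]
    exact (ENNReal.tendsto_toReal (measure_ne_top _ _)).comp
      (tendsto_measure_iUnion_atTop ball_mono)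
  obtain ⟨n, hn⟩ := (hlim.eventually (lt_mem_nhds hM)).exists
  exact ⟨n, n.cast_nonneg, hn.le⟩

lemma exists_pos_le_measureReal_ball_of_totallyBounded [IsFiniteMeasure μ]
    (hμ : TotallyBounded (msupport μ)) {ρ : ℝ} (hρ : 0 < ρ) :
    ∃ m > 0, ∀ x ∈ msupport μ, m ≤ μ.real (ball x ρ) := by
  obtain ⟨t, ht_supp, ht_fin, ht_cover⟩ :=
    finite_approx_of_totallyBounded hμ (ρ / 2) (half_pos hρ)
  have center_pos : ∀ y ∈ t, 0 < μ.real (ball y (ρ / 2)) := fun y hy =>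
    ENNReal.toReal_pos (ht_supp hy _ (half_pos hρ)).ne' (measure_ne_top _ _)
  obtain ⟨m, hm, hm_pos⟩ : ∃ m, (∀ y ∈ t, m ≤ μ.real (ball y (ρ / 2))) ∧ 0 < m :=
    (((eventually_all_finite ht_fin).2 fun y hy =>
      nhdsWithin_le_nhds (Iic_mem_nhds (center_pos y hy))).and
        (eventually_mem_nhdsWithin (a := (0 : ℝ)) (s := Ioi 0))).exists
  refine ⟨m, hm_pos, fun x hx => ?_⟩
  obtain ⟨y, hy, hxy⟩ := mem_iUnion₂.1 (ht_cover hx)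
  refine (hm y hy).trans (measureReal_mono (ball_subset_ball' ?_))
  rw [mem_ball'] at hxy
  linarith

end Balls

section NullSpheres

open Metric
open scoped Topology

lemma nonpos_of_forall_le_mul_rpow {m C a δ : ℝ} (ha : 0 < a) (hδ : 0 < δ)
    (h : ∀ ε, 0 < ε → ε ≤ δ → m ≤ C * ε ^ a) : m ≤ 0 := by
  have hlim : Tendsto (fun ε : ℝ => C * ε ^ a) (𝓝[>] 0) (𝓝 (C * 0 ^ a)) :=
    ((Real.continuousAt_rpow_const 0 a (Or.inr ha.le)).tendsto.const_mul C).mono_left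
      nhdsWithin_le_nhds
  rw [Real.zero_rpow ha.ne', mul_zero] at hlim
  refine ge_of_tendsto hlim ?_
  filter_upwards [Ioc_mem_nhdsGT hδ] with ε hε using h ε hε.1 hε.2

variable {X : Type*} [PseudoMetricSpace X] [MeasurableSpace X] {μ : Measure X}
  [IsFiniteMeasure μ] {x : X} {C a : ℝ}

lemma measure_sphere_zero_eq_zero_of_frostman {δ : ℝ} (ha : 0 < a) (hδ : 0 < δ)
    (h : ∀ r, 0 < r → r ≤ δ → μ.real (ball x r) ≤ C * r ^ a) : μ (sphere x 0) = 0 := by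
  have sphere_subset : ∀ r > 0, sphere x 0 ⊆ ball x r := fun r hr =>
    sphere_subset_closedBall.trans (closedBall_subset_ball hr)
  rw [← measureReal_eq_zero_iff]
  exact measureReal_nonneg.antisymm' <| nonpos_of_forall_le_mul_rpow ha hδ fun r hr hrδ =>
    (measureReal_mono (sphere_subset r hr)).trans (h r hr hrδ)

lemma measure_sphere_eq_zero_of_thin_annuli {r δ : ℝ} (ha : 0 < a) (hδ : 0 < δ)
    (h : ∀ ε, 0 < ε → ε ≤ δ → μ.real (ball x (r + ε) \ ball x r) ≤ C * ε ^ a) :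
    μ (sphere x r) = 0 := by
  have sphere_subset : ∀ ε > 0, sphere x r ⊆ ball x (r + ε) \ ball x r := fun ε hε =>
    subset_sdiff.2 ⟨sphere_subset_closedBall.trans (closedBall_subset_ball (by linarith)),
      sphere_disjoint_ball⟩
  rw [← measureReal_eq_zero_iff]
  exact measureReal_nonneg.antisymm' <| nonpos_of_forall_le_mul_rpow ha hδ fun ε hε hεδ =>
    (measureReal_mono (sphere_subset ε hε)).trans (h ε hε hεδ)

lemma measure_sphere_eq_zero_of_frostman_of_thin_annuli {C' b r δ : ℝ} (hr : 0 ≤ r)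
    (ha : 0 < a) (hδ : 0 < δ) (hball : ∀ ε, 0 < ε → ε ≤ δ → μ.real (ball x ε) ≤ C * ε ^ a)
    (hb : 0 < b)
    (hannulus : ∀ ε, 0 < ε → ε ≤ r → μ.real (ball x (r + ε) \ ball x r) ≤ C' * ε ^ b) :
    μ (sphere x r) = 0 := by
  rcases hr.eq_or_lt with rfl | hr_pos
  · exact measure_sphere_zero_eq_zero_of_frostman ha hδ hball
  · exact measure_sphere_eq_zero_of_thin_annuli hb hr_pos hannulus

end NullSpheres

section Rad

open Metric

variable {X : Type*} [PseudoMetricSpace X] [MeasurableSpace X] {μ : Measure X} {M : ℝ} {x : X}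

lemma rad_nonneg : 0 ≤ rad μ M x :=
  Real.sInf_nonneg fun _ hr => hr.1

lemma rad_le_of_le_measureReal_ball {r : ℝ} (hr : 0 ≤ r) (h : M ≤ μ.real (ball x r)) :
    rad μ M x ≤ r :=
  csInf_le ⟨0, fun _ hr => hr.1⟩ ⟨hr, h⟩

variable [IsFiniteMeasure μ]

lemma le_measureReal_ball_of_rad_lt (hM : M < μ.real univ) {r : ℝ} (hr : rad μ M x < r) :
    M ≤ μ.real (ball x r) := by
  obtain ⟨r', hr', hlt⟩ := exists_lt_of_csInf_lt (exists_nonneg_le_measureReal_ball hM x) hr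
  exact hr'.2.trans (measureReal_mono (ball_subset_ball hlt.le))

lemma lipschitzWith_one_rad (hM : M < μ.real univ) : LipschitzWith 1 (rad μ M) := by
  refine LipschitzWith.of_le_add fun x y => sub_le_iff_le_add.1 ?_
  refine le_csInf (exists_nonneg_le_measureReal_ball hM y) fun r ⟨hr, hMr⟩ => ?_
  have ball_subset : ball y r ⊆ ball x (r + dist x y) :=
    ball_subset_ball' (by rw [dist_comm])
  exact sub_le_iff_le_add.2 <| rad_le_of_le_measureReal_ball (add_nonneg hr dist_nonneg)
    (hMr.trans (measureReal_mono ball_subset))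

lemma measure_ball_rad_le : μ (ball x (rad μ M x)) ≤ ENNReal.ofReal M := by
  refine measure_ball_le_of_forall_lt fun r hr => ?_
  rcases lt_or_ge r 0 with hr_neg | hr_nonneg
  · simp [ball_eq_empty.2 hr_neg.le]
  · have hlt : μ.real (ball x r) < M :=
      lt_of_not_ge fun h => hr.not_ge (rad_le_of_le_measureReal_ball hr_nonneg h)
    rw [← ofReal_measureReal (μ := μ) (s := ball x r)]
    exact ENNReal.ofReal_le_ofReal hlt.le

variable [OpensMeasurableSpace X]

lemma le_measure_closedBall_rad (hM : M < μ.real univ) :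
    ENNReal.ofReal M ≤ μ (closedBall x (rad μ M x)) :=
  le_measure_closedBall_of_forall_gt fun _ hr =>
    ENNReal.ofReal_le_of_le_toReal (le_measureReal_ball_of_rad_lt hM hr)

lemma measure_ball_rad_eq (hM : M < μ.real univ) (hsphere : μ (sphere x (rad μ M x)) = 0) :
    μ (ball x (rad μ M x)) = ENNReal.ofReal M := by
  refine measure_ball_rad_le.antisymm ?_
  calc ENNReal.ofReal M
    _ ≤ μ (closedBall x (rad μ M x)) := le_measure_closedBall_rad hM
    _ ≤ μ (ball x (rad μ M x)) + μ (sphere x (rad μ M x)) := by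
      rw [← ball_union_sphere]
      exact measure_union_le _ _
    _ = μ (ball x (rad μ M x)) := by rw [hsphere, add_zero]

end Rad

theorem rad_wellDefined_and_lipschitz_general
    {X : Type*} [PseudoMetricSpace X] [MeasurableSpace X] [OpensMeasurableSpace X]
    (μ : Measure X) [IsFiniteMeasure μ] [NeZero μ] (hμ : TotallyBounded (msupport μ))
    {r₀ : ℝ} (hr₀ : 0 < r₀)
    (hsphere : ∀ x ∈ msupport μ, ∀ r, 0 ≤ r → r ≤ r₀ → μ (Metric.sphere x r) = 0) :
    ∃ M₀ : ℝ, 0 < M₀ ∧ ∀ M : ℝ, 0 < M → M ≤ M₀ →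
      (∀ x ∈ msupport μ, μ (Metric.ball x (rad μ M x)) = ENNReal.ofReal M) ∧
      LipschitzWith 1 (rad μ M) := by
  obtain ⟨m, hm_pos, hm⟩ := exists_pos_le_measureReal_ball_of_totallyBounded hμ hr₀
  obtain ⟨M₀, hM₀_pos, hM₀⟩ := exists_between (lt_min hm_pos (measureReal_univ_pos (μ := μ)))
  obtain ⟨hM₀m, hM₀_univ⟩ := lt_min_iff.1 hM₀
  refine ⟨M₀, hM₀_pos, fun M _ hMM₀ => ?_⟩
  have hM_univ : M < μ.real univ := hMM₀.trans_lt hM₀_univ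
  refine ⟨fun x hx => measure_ball_rad_eq hM_univ ?_, lipschitzWith_one_rad hM_univ⟩
  have rad_le : rad μ M x ≤ r₀ :=
    rad_le_of_le_measureReal_ball hr₀.le ((hMM₀.trans hM₀m.le).trans (hm x hx))
  exact hsphere x hx _ rad_nonneg rad_le

/-- Under the Frostman and thin annuli assumptions, for all sufficiently small
`M > 0` the radius function `r_M` satisfies `μ(B(x, r_M(x))) = M` on the support
of `μ`, and `r_M` is `1`-Lipschitz. -/
theorem rad_wellDefined_and_lipschitz
    {X : Type*} [MetricSpace X] [CompactSpace X] [MeasurableSpace X] [BorelSpace X]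
    (μ : Measure X) [IsProbabilityMeasure μ]
    -- Frostman assumption
    (Cf s rf : ℝ) (hCf : 0 < Cf) (hs : 0 < s) (hrf : 0 < rf)
    (hfrost : ∀ (x : X) (r : ℝ), 0 < r → r ≤ rf →
      (μ (Metric.ball x r)).toReal ≤ Cf * r ^ s)
    -- thin annuli assumption
    (Ca α₀ r₀ : ℝ) (hCa : 0 < Ca) (hα₀ : 0 < α₀) (hr₀ : 0 < r₀)
    (hannuli : ∀ (x : X) (ε r : ℝ), 0 < ε → ε ≤ r → r ≤ r₀ →
      (μ (Metric.ball x (r + ε) \ Metric.ball x r)).toReal ≤ Ca * ε ^ α₀) :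
    ∃ M₀ : ℝ, 0 < M₀ ∧ ∀ M : ℝ, 0 < M → M ≤ M₀ →
      (∀ x ∈ msupport μ, μ (Metric.ball x (rad μ M x)) = ENNReal.ofReal M) ∧
      LipschitzWith 1 (rad μ M) :=
  rad_wellDefined_and_lipschitz_general μ
    (isCompact_univ.totallyBounded.subset (subset_univ _)) hr₀ fun x _ _ hr hr_le =>
      measure_sphere_eq_zero_of_frostman_of_thin_annuli hr hs hrf (hfrost x) hα₀
        fun ε hε hεr => hannuli x ε _ hε hεr hr_le
end
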